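/- arXiv:2012.15357 — 6 statements merged into one kernel-verified Lean document; each statement's English description precedes it below -/
import Mathlib

section
/- Let q be a prime power. Every 3-club of rank 4 in PG(1, q^4) — that is, every F_q-linear set L_U of rank 4 in PG(1, q^4) having exactly one point of weight 3 and q³ points of weight 1 — is PΓL(2, q^4)-equivalent to { ⟨(x, Tr_{q^4/q}(x))⟩_{F_{q^4}} : x ∈ F_{q^4}^* }, where Tr_{q^4/q}(x) = x + x^q + x^{q²} + x^{q³}. -/
/-!
Let `n = [K : F]`, let `f` be any nonzero `F`-linear functional on `K`, and let `⟨v⟩` be the point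
of weight `n - 1` of a linear set `L_U` of rank `n`. Then `U = H v ⊕ F u` for a hyperplane `H` of
`K` and a vector `u` off the line `⟨v⟩`. Every `F`-linear functional on `K` is of the form
`x ↦ f (x a)`, so some `a ≠ 0` satisfies `f (H a) = 0`. The `K`-linear map sending `v` to `(a, 0)`
and `u` to `(b, 1)`, where `f b = 1`, therefore carries `U` into the graph of `f`, and equality
holds by dimension. The theorem is the case where `f` is the trace of `F_{q^4}` over `F_q`.
-/

section

theorem finrank_graph {R M M' : Type*} [Ring R] [AddCommGroup M] [Module R M] [AddCommGroup M']
    [Module R M'] (φ : M →ₗ[R] M') : Module.finrank R φ.graph = Module.finrank R M := by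
  rw [LinearMap.graph_eq_range_prod]
  exact LinearMap.finrank_range_of_inj fun _ _ h ↦ congrArg Prod.fst h

section DivisionRing

variable {D V V' : Type*} [DivisionRing D] [AddCommGroup V] [Module D V]
  [AddCommGroup V'] [Module D V']

theorem finrank_eq_of_card_eq_pow [Fintype D] [Fintype V] {n : ℕ}
    (h : Fintype.card V = Fintype.card D ^ n) : Module.finrank D V = n :=
  Nat.pow_right_injective Fintype.one_lt_card (Module.card_eq_pow_finrank.symm.trans h)

theorem exists_mem_notMem_inf_sup_span_singleton_eq {U W : Submodule D V} [FiniteDimensional D U]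
    (h : Module.finrank D ↥(U ⊓ W) + 1 = Module.finrank D U) :
    ∃ u ∈ U, u ∉ W ∧ U ⊓ W ⊔ Submodule.span D {u} = U := by
  obtain ⟨u, hu, huW⟩ : ∃ u ∈ U, u ∉ W := by
    by_contra! hUW
    rw [inf_eq_left.mpr hUW] at h
    omega
  have inf_lt_sup : U ⊓ W < U ⊓ W ⊔ Submodule.span D {u} :=
    left_lt_sup.mpr fun hle ↦ huW (hle (Submodule.mem_span_singleton_self u)).2
  have sup_le_U : U ⊓ W ⊔ Submodule.span D {u} ≤ U :=
    sup_le inf_le_left ((Submodule.span_singleton_le_iff_mem u U).mpr hu)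
  have := Submodule.finiteDimensional_of_le sup_le_U
  have finrank_lt := Submodule.finrank_lt_finrank_of_lt inf_lt_sup
  exact ⟨u, hu, huW, Submodule.eq_of_le_of_finrank_le sup_le_U (by omega)⟩

theorem exists_linearEquiv_forall_apply_eq {ι : Type*} [Fintype ι] [Nonempty ι]
    {v : ι → V} {v' : ι → V'} (hv : LinearIndependent D v) (hv' : LinearIndependent D v')
    (hV : Fintype.card ι = Module.finrank D V) (hV' : Fintype.card ι = Module.finrank D V') :
    ∃ g : V ≃ₗ[D] V', ∀ i, g (v i) = v' i := by
  let b := basisOfLinearIndependentOfCardEqFinrank hv hV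
  let b' := basisOfLinearIndependentOfCardEqFinrank hv' hV'
  refine ⟨b.equiv b' (Equiv.refl ι), fun i ↦ ?_⟩
  simpa [b, b'] using b.equiv_apply i b' (Equiv.refl ι)

theorem exists_linearEquiv_prod_apply_eq (hV : Module.finrank D V = 2) {v u : V} (hv : v ≠ 0)
    (hu : u ∉ Submodule.span D {v}) {a : D} (ha : a ≠ 0) (b : D) :
    ∃ g : V ≃ₗ[D] D × D, g v = (a, 0) ∧ g u = (b, 1) := by
  have hvu : LinearIndependent D ![v, u] :=
    (LinearIndependent.pair_iff' hv).mpr fun c hc ↦ hu (Submodule.mem_span_singleton.mpr ⟨c, hc⟩)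
  have hab : LinearIndependent D ![(a, (0 : D)), (b, 1)] :=
    (LinearIndependent.pair_iff' (by simpa using ha)).mpr (by simp)
  obtain ⟨g, hg⟩ := exists_linearEquiv_forall_apply_eq hvu hab (by simp [hV]) (by simp)
  exact ⟨g, hg 0, hg 1⟩

end DivisionRing

variable {F K V : Type*} [Field F] [DivisionRing K] [Algebra F K]

theorem exists_forall_apply_eq_apply_mul [FiniteDimensional F K] {f : K →ₗ[F] F} (hf : f ≠ 0)
    (φ : K →ₗ[F] F) : ∃ a : K, ∀ x, φ x = f (x * a) := by
  let compMulRight : K →ₗ[F] Module.Dual F K := (LinearMap.mul F K).flip.compr₂ f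
  have compMulRight_injective : Function.Injective compMulRight := by
    refine (injective_iff_map_eq_zero compMulRight).mpr fun a ha ↦ ?_
    by_contra ha0
    refine hf (LinearMap.ext fun x ↦ ?_)
    simpa [compMulRight, ha0] using LinearMap.congr_fun ha (x * a⁻¹)
  obtain ⟨a, rfl⟩ := (LinearMap.injective_iff_surjective_of_finrank_eq_finrank
    Subspace.dual_finrank_eq.symm).mp compMulRight_injective φ
  exact ⟨a, fun _ ↦ rfl⟩

theorem exists_ne_zero_forall_mem_apply_mul_eq_zero [FiniteDimensional F K] {f : K →ₗ[F] F}
    (hf : f ≠ 0) {H : Submodule F K} (hH : H ≠ ⊤) : ∃ a ≠ 0, ∀ h ∈ H, f (h * a) = 0 := by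
  obtain ⟨φ, hφ, hHφ⟩ := Submodule.exists_le_ker_of_lt_top H hH.lt_top
  obtain ⟨a, ha⟩ := exists_forall_apply_eq_apply_mul hf φ
  refine ⟨a, ?_, fun h hh ↦ ha h ▸ hHφ hh⟩
  rintro rfl
  exact hφ (LinearMap.ext fun x ↦ by simp [ha])

variable [AddCommGroup V] [Module K V] [Module F V] [IsScalarTower F K V]

theorem comap_toSpanSingleton_ne_top {U : Submodule F V} {v : V} (hv : v ≠ 0)
    (h : Module.finrank F ↥(U ⊓ (Submodule.span K {v}).restrictScalars F) < Module.finrank F K) :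
    U.comap ((LinearMap.toSpanSingleton K V v).restrictScalars F) ≠ ⊤ := by
  intro htop
  have span_le : (Submodule.span K {v}).restrictScalars F ≤ U := by
    rintro _ hx
    obtain ⟨c, rfl⟩ := Submodule.mem_span_singleton.mp hx
    exact (htop.ge trivial : c ∈ U.comap _)
  have finrank_span : Module.finrank F K = Module.finrank F (Submodule.span K {v}) :=
    ((LinearEquiv.toSpanNonzeroSingleton K V v hv).restrictScalars F).finrank_eq
  rw [inf_eq_right.mpr span_le] at h
  exact h.ne' finrank_span

theorem exists_linearEquiv_map_eq_graph [FiniteDimensional F K] {f : K →ₗ[F] F} (hf : f ≠ 0)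
    (hV : Module.finrank K V = 2) {U : Submodule F V}
    (hU : Module.finrank F U = Module.finrank F K) {v : V} (hv : v ≠ 0)
    (hUv : Module.finrank F ↥(U ⊓ (Submodule.span K {v}).restrictScalars F) + 1 =
      Module.finrank F K) :
    ∃ g : V ≃ₗ[K] K × K,
      U.map (g.restrictScalars F : V →ₗ[F] K × K) = (Algebra.linearMap F K ∘ₗ f).graph := by
  have : FiniteDimensional F U := Module.finite_of_finrank_pos (hU ▸ Module.finrank_pos)
  obtain ⟨u, -, huv, hsup⟩ := exists_mem_notMem_inf_sup_span_singleton_eq (hUv.trans hU.symm)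
  obtain ⟨a, ha, hfa⟩ := exists_ne_zero_forall_mem_apply_mul_eq_zero hf
    (comap_toSpanSingleton_ne_top hv (Nat.lt_of_succ_le hUv.le))
  obtain ⟨b, hb⟩ := LinearMap.surjective hf 1
  obtain ⟨g, hgv, hgu⟩ := exists_linearEquiv_prod_apply_eq hV hv huv ha b
  have map_le_graph :
      U.map (g.restrictScalars F : V →ₗ[F] K × K) ≤ (Algebra.linearMap F K ∘ₗ f).graph := by
    rw [← hsup, Submodule.map_le_iff_le_comap, sup_le_iff, Submodule.span_singleton_le_iff_mem]
    constructor
    · rintro _ ⟨hcU, hcv⟩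
      obtain ⟨c, rfl⟩ := Submodule.mem_span_singleton.mp hcv
      simp [hgv, hfa c hcU]
    · simp [hgu, hb]
  refine ⟨g, Submodule.eq_of_le_of_finrank_eq map_le_graph ?_⟩
  rw [finrank_graph, ← hU]
  exact LinearEquiv.finrank_map_eq (g.restrictScalars F) U

theorem stmt_8_general [FiniteDimensional F K] {f : K →ₗ[F] F} (hf : f ≠ 0)
    (hV : Module.finrank K V = 2) {U : Submodule F V}
    (hU : Module.finrank F U = Module.finrank F K) {v : V} (hv : v ≠ 0)
    (hUv : Module.finrank F ↥(U ⊓ (Submodule.span K {v}).restrictScalars F) + 1 =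
      Module.finrank F K) :
    ∃ g : V ≃ₗ[K] K × K,
      {P | ∃ u ∈ U, u ≠ 0 ∧ P = Submodule.span K {g u}} =
        {P | ∃ x : K, x ≠ 0 ∧ P = Submodule.span K {(x, algebraMap F K (f x))}} := by
  obtain ⟨g, hg⟩ := exists_linearEquiv_map_eq_graph hf hV hU hv hUv
  have snd_eq {u : V} (hu : u ∈ U) : (g u).2 = algebraMap F K (f (g u).1) :=
    hg.le (Submodule.mem_map_of_mem hu)
  refine ⟨g, Set.ext fun P ↦ ⟨?_, ?_⟩⟩
  · rintro ⟨u, hu, hu0, rfl⟩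
    refine ⟨(g u).1, fun hx ↦ hu0 (g.map_eq_zero_iff.mp (Prod.ext hx ?_)), ?_⟩
    · simp [snd_eq hu, hx]
    · rw [← snd_eq hu]
  · rintro ⟨x, hx, rfl⟩
    obtain ⟨u, hu, hgu⟩ : (x, algebraMap F K (f x)) ∈ U.map (g.restrictScalars F : V →ₗ[F] K × K) :=
      hg.ge rfl
    refine ⟨u, hu, ?_, congrArg (Submodule.span K {·}) hgu.symm⟩
    rintro rfl
    exact hx (by simpa using congrArg Prod.fst hgu.symm)

end

/-- Corollary `cor:PG1q4clubs`, first part: every 3-club of rank 4 in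
`PG(1,q^4)` — an `F_q`-linear set `L_U` of rank 4 with exactly one point of weight 3 and
`q^3` points of weight 1 — is `PΓL(2,q^4)`-equivalent to
`{⟨(x, Tr_{q^4/q}(x))⟩ : x ≠ 0}` where `Tr_{q^4/q}(x) = x + x^q + x^{q^2} + x^{q^3}`.
Here `F = F_q`, `K = F_{q^4}`, points of `PG(1,q^4)` are the `K`-lines
`Submodule.span K {u}` of `K × K`, the weight of a point `W` in `L_U` is
`dim_F (U ⊓ W)`, and `PΓL`-equivalence is realised by a bijective `σ`-semilinear map of
`K × K` for a field automorphism `σ` of `K`. -/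
theorem stmt_8 (p e q : ℕ) (hp : p.Prime) (he : 1 ≤ e) (hq : q = p ^ e)
    (F K : Type) [Field F] [Fintype F] [Field K] [Fintype K] [Algebra F K]
    (hF : Fintype.card F = q) (hK : Fintype.card K = q ^ 4)
    (U : Submodule F (K × K)) (hU : Module.finrank F U = 4)
    (LU : Set (Submodule K (K × K)))
    (hLU : LU = {W | ∃ u ∈ (U : Set (K × K)), u ≠ 0 ∧ W = Submodule.span K {u}})
    (hone : Nat.card {W : Submodule K (K × K) //
        W ∈ LU ∧ Module.finrank F ↥(U ⊓ Submodule.restrictScalars F W) = 3} = 1)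
    (hmany : Nat.card {W : Submodule K (K × K) //
        W ∈ LU ∧ Module.finrank F ↥(U ⊓ Submodule.restrictScalars F W) = 1} = q ^ 3) :
    ∃ σ : K ≃+* K, ∃ g : (K × K) →ₛₗ[(σ : K →+* K)] (K × K), Function.Bijective g ∧
      {W : Submodule K (K × K) | ∃ u ∈ (U : Set (K × K)), u ≠ 0 ∧
          W = Submodule.span K {g u}}
        = {W | ∃ x : K, x ≠ 0 ∧
            W = Submodule.span K {(x, x + x ^ q + x ^ q ^ 2 + x ^ q ^ 3)}} := by
  subst hF
  have hn : Module.finrank F K = 4 := finrank_eq_of_card_eq_pow hK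
  have htrace (x : K) : algebraMap F K (Algebra.trace F K x) =
      x + x ^ Fintype.card F + x ^ Fintype.card F ^ 2 + x ^ Fintype.card F ^ 3 := by
    simp [FiniteField.algebraMap_trace_eq_sum_pow, hn, Finset.sum_range_succ]
  obtain ⟨⟨P, hP, hUP⟩⟩ := (Nat.card_eq_one_iff_unique.mp hone).2
  obtain ⟨v, -, hv, rfl⟩ := hLU ▸ hP
  obtain ⟨g, hg⟩ := stmt_8_general (Algebra.trace_ne_zero F K) (by simp) (hU.trans hn.symm) hv
    (by rw [hUP, hn])
  simp only [htrace] at hg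
  exact ⟨RingEquiv.refl K, g.toLinearMap, g.bijective, hg⟩
end

section
/- Let q = 2^{2s} with s ≥ 1, let w ∈ F_q satisfy w² = w + 1, and let f_w(x) = x^{q^4} + w x^{q³} + w x^q + x ∈ F_{q^5}[x]. Then dim_{F_q} ker(f_w) = 3, and for every m ∈ F_{q^5} with m ≠ 0 one has dim_{F_q} ker(f_w(x) − m·x) ≤ 1. Consequently f_w is a 1-fat polynomial over F_{q^5} of index 0 with maximum weight 3. -/
/-!
Write `σ` for the `q`-Frobenius of `K`, so that `σ ^ 5 = 1`. In characteristic `2`,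
`X ^ 5 - 1 = (X + 1) * (X ^ 2 + w * X + 1) * (X ^ 2 + w ^ 2 * X + 1)`, while `f_w` is
`(X + 1) ^ 2 * (X ^ 2 + w * X + 1)` evaluated at `σ`. Hence `f_w` has image inside the kernel of
the quadratic factor `h = X ^ 2 + w ^ 2 * X + 1` and kernel inside that of the cubic factor
`(X ^ 5 - 1) / h`, which is `w * (X + w) * f_w` modulo `X ^ 5 - 1`. Since these kernels have at
most `q ^ 2` and `q ^ 3` elements, rank-nullity forces `#ker f_w = q ^ 3`.

If `f_w x = m * x` with `m ≠ 0`, then `y = m * x` lies in the image of `f_w`, so `h(σ) y = 0`,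
which reduces `f_w (m⁻¹ * y)` to the form `β * y + α * σ y` and the equation `f_w (m⁻¹ * y) = y`
to `(β - 1) * y + α * σ y = 0`. Applying `σ` and `σ⁻¹` to `α = 0` would give `β = 0`, so the two
coefficients do not both vanish and there are at most `q` solutions.
-/

section RootCount

open Polynomial

theorem natCard_le_pow_of_sum_iterate_eq_zero {R : Type*} [CommRing R] [IsDomain R] {q d : ℕ}
    (hq : 1 < q) {σ : R → R} (hσ : ∀ x, σ x = x ^ q) {c : Fin (d + 1) → R} (hc : c ≠ 0)
    {p : R → Prop} (hp : ∀ x, p x → ∑ i, c i * σ^[i] x = 0) :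
    Nat.card {x // p x} ≤ q ^ d := by
  let P : R[X] := ∑ i, C (c i) * X ^ q ^ (i : ℕ)
  have hcoeff (j : Fin (d + 1)) : P.coeff (q ^ (j : ℕ)) = c j := by
    simp [P, finsetSum_coeff, coeff_X_pow, Nat.pow_right_inj hq, ← Fin.ext_iff]
  have hP : P ≠ 0 := fun hP => hc (funext fun j => by simp [← hcoeff, hP])
  have hdeg : P.natDegree ≤ q ^ d := natDegree_sum_le_of_forall_le _ _ fun i _ =>
    (natDegree_C_mul_X_pow_le _ _).trans (Nat.pow_le_pow_right hq.le (Nat.le_of_lt_succ i.2))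
  have hroots : {x | p x} ⊆ P.rootSet R := fun x hx => by
    simpa [mem_rootSet, hP, P, funext hσ, pow_iterate] using hp x hx
  calc
    Nat.card {x // p x} ≤ Nat.card (P.rootSet R) := Nat.card_mono (P.rootSet_finite R) hroots
    _ ≤ P.natDegree := P.ncard_rootSet_le R
    _ ≤ q ^ d := hdeg

end RootCount

theorem natCard_le_natCard_ker_mul_natCard {A B : Type*} [AddGroup A] [AddGroup B]
    (f : A →+ B) {p : B → Prop} [Finite {y // p y}] (hp : ∀ x, p (f x)) :
    Nat.card A ≤ Nat.card {x // f x = 0} * Nat.card {y // p y} := by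
  have hrange : Nat.card f.range ≤ Nat.card {y // p y} :=
    Nat.card_mono (t := {y | p y}) ‹_› (by rintro _ ⟨x, rfl⟩; exact hp x)
  rw [← f.ker.card_mul_index, AddSubgroup.index_ker]
  exact Nat.mul_le_mul_left _ hrange

section Identities

variable {R : Type*} [CommRing R]

/-- The polynomial `f_w` of the paper as an additive map, with an arbitrary ring endomorphism `σ`
in the place of the Frobenius `x ↦ x ^ q`. -/
def clubMap (σ : R →+* R) (w : R) : R →+ R where
  toFun x := σ^[4] x + w * σ^[3] x + w * σ x + x
  map_zero' := by simp
  map_add' x y := by simp only [iterate_map_add, map_add]; ring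

variable {σ : R →+* R} {w : R}

theorem clubMap_apply (x : R) :
    clubMap σ w x = σ^[4] x + w * σ^[3] x + w * σ x + x := rfl

variable [CharP R 2]

theorem quadratic_clubMap_eq_zero (hσ : ∀ x, σ^[5] x = x) (hw : σ w = w)
    (hw2 : w ^ 2 = w + 1) (x : R) :
    clubMap σ w x + w ^ 2 * σ (clubMap σ w x) + σ^[2] (clubMap σ w x) = 0 := by
  simp only [Function.iterate_succ_apply, Function.iterate_zero_apply, clubMap_apply, map_add,
    map_mul, hw] at hσ ⊢
  grind [CharTwo.two_eq_zero (R := R)]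

theorem cubic_eq_clubMap (hσ : ∀ x, σ^[5] x = x) (hw : σ w = w) (hw2 : w ^ 2 = w + 1) (x : R) :
    x + w ^ 2 * σ x + w ^ 2 * σ^[2] x + σ^[3] x =
      w * (σ (clubMap σ w x) + w * clubMap σ w x) := by
  simp only [Function.iterate_succ_apply, Function.iterate_zero_apply, clubMap_apply, map_add,
    map_mul, hw] at hσ ⊢
  grind [CharTwo.two_eq_zero (R := R)]

theorem clubMap_mul_of_quadratic_eq_zero (hw : σ w = w) (hw2 : w ^ 2 = w + 1) (a : R) {y : R}
    (hy : y + w ^ 2 * σ y + σ^[2] y = 0) :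
    clubMap σ w (a * y) =
      (w ^ 2 * σ^[4] a + σ^[3] a + a) * y + (σ^[4] a + σ^[3] a + w * σ a) * σ y := by
  have hσ2 : σ^[2] y = w ^ 2 * σ y + y := by grind [CharTwo.two_eq_zero (R := R)]
  have hσ3 : σ^[3] y = w ^ 2 * σ^[2] y + σ y := by simpa [hw] using congrArg σ hσ2
  have hσ4 : σ^[4] y = w ^ 2 * σ^[3] y + σ^[2] y := by simpa [hw] using congrArg σ hσ3
  rw [clubMap_apply, iterate_map_mul, iterate_map_mul, map_mul]
  grind [CharTwo.two_eq_zero (R := R)]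

theorem clubMap_mul_coeff_zero_eq_zero_of_coeff_one_eq_zero (hσ : ∀ x, σ^[5] x = x)
    (hw : σ w = w) (hw2 : w ^ 2 = w + 1) {a : R} (ha : σ^[4] a + σ^[3] a + w * σ a = 0) :
    w ^ 2 * σ^[4] a + σ^[3] a + a = 0 := by
  have h2 : (2 : R) = 0 := CharTwo.two_eq_zero
  have hσ_inj : Function.Injective σ := Function.LeftInverse.injective (g := σ^[4]) hσ
  have hσa : σ (σ (σ (σ (σ a)))) = a := hσ a
  have ha_succ : a + σ^[4] a + w * σ^[2] a = 0 := by
    simpa [hw, hσa] using congrArg σ ha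
  have ha_pred : σ^[3] a + σ^[2] a + w * a = 0 := by
    rw [← map_eq_zero_iff σ hσ_inj]
    simpa [hw] using ha
  linear_combination w ^ 2 * ha_succ + ha_pred - (a + (w + 1) * σ^[2] a) * hw2 -
    (w * a + (w + 1) * σ^[2] a) * h2

end Identities

section FiniteField

variable {K : Type*} [Field K] [Finite K] {q : ℕ}

theorem iterate_eq_self_of_natCard {n : ℕ} (hK : Nat.card K = q ^ n) {σ : K → K}
    (hσ : ∀ x, σ x = x ^ q) (x : K) : σ^[n] x = x := by
  have := Fintype.ofFinite K
  rw [funext hσ, pow_iterate, ← hK, Nat.card_eq_fintype_card]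
  exact FiniteField.pow_card x

variable [CharP K 2] {σ : K →+* K} {w : K}

theorem natCard_ker_clubMap (hq : 1 < q) (hK : Nat.card K = q ^ 5) (hσ : ∀ x, σ x = x ^ q)
    (hw : σ w = w) (hw2 : w ^ 2 = w + 1) : Nat.card {x // clubMap σ w x = 0} = q ^ 3 := by
  have hσ5 := iterate_eq_self_of_natCard hK hσ
  apply le_antisymm
  · have hc : ![1, w ^ 2, w ^ 2, 1] ≠ 0 := fun h => one_ne_zero (congrFun h 0)
    refine natCard_le_pow_of_sum_iterate_eq_zero hq hσ hc fun x hx => ?_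
    have hcubic := cubic_eq_clubMap hσ5 hw hw2 x
    rw [hx, map_zero, mul_zero, add_zero, mul_zero] at hcubic
    simpa [Fin.sum_univ_four] using hcubic
  · have hquad : Nat.card {y : K // y + w ^ 2 * σ y + σ^[2] y = 0} ≤ q ^ 2 := by
      have hc : ![1, w ^ 2, 1] ≠ 0 := fun h => one_ne_zero (congrFun h 0)
      refine natCard_le_pow_of_sum_iterate_eq_zero hq hσ hc fun y hy => ?_
      simpa [Fin.sum_univ_three] using hy
    refine Nat.le_of_mul_le_mul_right ?_ (pow_pos (zero_lt_one.trans hq) 2)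
    calc
      q ^ 3 * q ^ 2 = Nat.card K := by rw [hK, pow_add q 3 2]
      _ ≤ _ := natCard_le_natCard_ker_mul_natCard _ (quadratic_clubMap_eq_zero hσ5 hw hw2)
      _ ≤ _ := Nat.mul_le_mul_left _ hquad

theorem natCard_clubMap_eq_mul_le (hq : 1 < q) (hK : Nat.card K = q ^ 5) (hσ : ∀ x, σ x = x ^ q)
    (hw : σ w = w) (hw2 : w ^ 2 = w + 1) {m : K} (hm : m ≠ 0) :
    Nat.card {x // clubMap σ w x = m * x} ≤ q := by
  have hσ5 := iterate_eq_self_of_natCard hK hσ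
  let a := m⁻¹
  let α := σ^[4] a + σ^[3] a + w * σ a
  let β := w ^ 2 * σ^[4] a + σ^[3] a + a
  have hc : ![(β - 1) * m, α * σ m] ≠ 0 := by
    intro h
    have hα : α = 0 := by simpa [hm] using congrFun h 1
    have hβ : β = 0 := clubMap_mul_coeff_zero_eq_zero_of_coeff_one_eq_zero hσ5 hw hw2 hα
    simpa [hβ, hm] using congrFun h 0
  have hroot (x : K) (hx : clubMap σ w x = m * x) : ((β - 1) * m) * x + α * σ m * σ x = 0 := by
    have hquad := quadratic_clubMap_eq_zero hσ5 hw hw2 x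
    have hfy : clubMap σ w (a * (m * x)) = m * x := by rw [inv_mul_cancel_left₀ hm, hx]
    rw [hx] at hquad
    rw [clubMap_mul_of_quadratic_eq_zero hw hw2 a hquad, map_mul] at hfy
    linear_combination hfy
  simpa using natCard_le_pow_of_sum_iterate_eq_zero hq hσ hc fun x hx => by
    simpa using hroot x hx

end FiniteField

/-- Theorem `th:3club`: for `q = 2^{2s}` and `w ∈ F_q` with `w² = w + 1`,
the polynomial `f_w(x) = x^{q^4} + w x^{q^3} + w x^q + x` over `K = F_{q^5}` has
`dim_{F_q} ker f_w = 3` and `dim_{F_q} ker (f_w - m·x) ≤ 1` for every `m ≠ 0`;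
consequently `f_w` is a 1-fat polynomial of index 0 with maximum weight 3.
Dimensions over `F_q` are encoded as `Nat.log q` of the kernel cardinality. -/
theorem stmt_9 (s : ℕ) (hs : 1 ≤ s) (q : ℕ) (hq : q = 2 ^ (2 * s))
    (K : Type) [Field K] [Fintype K] (hK : Fintype.card K = q ^ 5)
    (w : K) (hw : w ^ q = w) (hw2 : w ^ 2 = w + 1)
    (f : K → K) (hf : f = fun x => x ^ q ^ 4 + w * x ^ q ^ 3 + w * x ^ q + x) :
    Nat.log q (Nat.card {x : K // f x = 0}) = 3 ∧
    (∀ m : K, m ≠ 0 → Nat.log q (Nat.card {x : K // f x = m * x}) ≤ 1) ∧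
    Nat.card {m : K // 1 < Nat.log q (Nat.card {x : K // f x = m * x})} = 1 ∧
    (∃ m : K, 1 < Nat.log q (Nat.card {x : K // f x = m * x}) ∧
      Nat.log q (Nat.card {x : K // f x = m * x}) = 3) ∧
    (∀ m : K, 1 < Nat.log q (Nat.card {x : K // f x = m * x}) →
      Nat.log q (Nat.card {x : K // f x = m * x}) ≤ 3) := by
  have hq1 : 1 < q := hq ▸ Nat.one_lt_two_pow (by omega)
  have : Fact (Nat.Prime 2) := ⟨Nat.prime_two⟩
  have : CharP K 2 := charP_of_card_eq_prime_pow (hK.trans (by rw [hq, ← pow_mul]))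
  let σ : K →+* K := iterateFrobenius K 2 (2 * s)
  have hσ (x : K) : σ x = x ^ q := by rw [hq]; rfl
  have hfσ : f = clubMap σ w := by
    ext x
    simp only [hf, clubMap_apply, funext hσ, pow_iterate]
  rw [← Nat.card_eq_fintype_card] at hK
  rw [← hσ] at hw
  have hzero : Nat.log q (Nat.card {x // f x = 0}) = 3 := by
    rw [hfσ, natCard_ker_clubMap hq1 hK hσ hw hw2, Nat.log_pow hq1]
  have hne (m : K) (hm : m ≠ 0) : Nat.log q (Nat.card {x // f x = m * x}) ≤ 1 := by
    rw [hfσ, ← Nat.log_pow hq1 1, pow_one]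
    exact Nat.log_mono_right (natCard_clubMap_eq_mul_le hq1 hK hσ hw hw2 hm)
  have hfat (m : K) : 1 < Nat.log q (Nat.card {x // f x = m * x}) ↔ m = 0 :=
    ⟨fun h => by_contra fun hm => (hne m hm).not_gt h, by rintro rfl; simp [hzero]⟩
  refine ⟨hzero, hne, by simp [hfat], ⟨0, (hfat 0).2 rfl, by simpa using hzero⟩, fun m hm => ?_⟩
  simpa [(hfat m).1 hm] using hzero.le
end

section
/- Let q = 2^{2s} with s ≥ 1, let w ∈ F_q satisfy w² = w + 1, let f_w(x) = x^{q^4} + w x^{q³} + w x^q + x ∈ F_{q^5}[x] and let f̂_w(x) = x + x^q + w x^{q²} + w x^{q^4} be its adjoint. For an F_q-linearized polynomial g over F_{q^5}, set U_g = { (x, g(x)) : x ∈ F_{q^5} } ⊆ F_{q^5}² and L_g = { ⟨(x, g(x))⟩_{F_{q^5}} : x ∈ F_{q^5}^* }. If g is an F_q-linearized polynomial over F_{q^5} with L_g = L_{f_w}, then there exists λ ∈ F_{q^5}^* such that λ·U_g = U_{f_w} or λ·U_g = U_{f̂_w}. -/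
/-!
Let `f` be an additive map of a finite field `K`. For every point of the linear set `L_f`, the
number of `u ∈ Kˣ` whose slope `f u / u` gives that point is one less than the order of a nonzero
additive subgroup of `K`, so it is `-1` in `K`. Hence each power sum `∑ u, F (f u / u)` depends only
on `L_f`. For `F m = ∏ t, m ^ q ^ s t`, with fewer than `q` distinct exponents, uniqueness of base
`q` digits turns this sum into minus the permanent of a principal submatrix of the Dickson matrix of
`f`.

If `g`, with coefficients `bᵢ`, has the linear set of `f_w`, the permanents of order at most three
give `b₂ = 0` or `b₃ = 0`. If `b₂ = 0`, they show that `b₁ w²` has norm one, and the `l` of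
Hilbert's Theorem 90 with `l ^ q = b₁ w² l` satisfies `l • U_g = U_{f_w}`. If `b₃ = 0`, the same
applies to the adjoint of `g`, whose Dickson matrix is the transpose of that of `g`.
-/

open Finset Function
open scoped Pointwise Matrix

namespace LinearSet

theorem permanent_fin_two {R : Type*} [CommSemiring R] (M : Matrix (Fin 2) (Fin 2) R) :
    M.permanent = M 0 0 * M 1 1 + M 0 1 * M 1 0 := by
  simp [Matrix.permanent, univ_perm_fin_succ, ← univ_product_univ, mul_comm]

theorem permanent_fin_three {R : Type*} [CommSemiring R] (M : Matrix (Fin 3) (Fin 3) R) :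
    M.permanent = M 0 0 * M 1 1 * M 2 2 + M 0 0 * (M 1 2 * M 2 1) + M 1 1 * (M 0 2 * M 2 0)
      + M 2 2 * (M 0 1 * M 1 0) + (M 0 1 * M 1 2 * M 2 0 + M 0 2 * M 2 1 * M 1 0) := by
  open Equiv in
  have hperm : (univ : Finset (Perm (Fin 3))) =
      {1, swap 1 2, swap 0 2, swap 0 1, swap 0 1 * swap 1 2, swap 1 2 * swap 0 1} := by decide
  rw [Matrix.permanent, hperm]
  simp +decide only [Fin.prod_univ_three, mem_insert, mem_singleton, not_false_eq_true,
    sum_insert, sum_singleton, Equiv.Perm.coe_one, Equiv.Perm.coe_mul, id_eq, comp_apply,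
    Equiv.swap_apply_def, ↓reduceIte]
  ring

theorem exists_pow_eq_of_pow_eq_one {G : Type*} [CommGroup G] [IsCyclic G] [Finite G] {d m : ℕ}
    (hdm : Nat.card G = d * m) {x : G} (hx : x ^ m = 1) : ∃ y, y ^ d = x := by
  have h := Nat.card_pos (α := G)
  have hd : 0 < d := Nat.pos_of_mul_pos_right (hdm ▸ h)
  have hle : (powMonoidHom d : G →* G).range ≤ (powMonoidHom m).ker := by
    rintro _ ⟨y, rfl⟩
    simp [MonoidHom.mem_ker, ← pow_mul, ← hdm]
  have hcard : Nat.card (powMonoidHom m : G →* G).ker ≤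
      Nat.card (powMonoidHom d : G →* G).range := by
    rw [IsCyclic.card_powMonoidHom_ker, IsCyclic.card_powMonoidHom_range, hdm,
      Nat.gcd_mul_left_left, Nat.gcd_mul_right_left, Nat.mul_div_cancel_left _ hd]
  exact (Subgroup.eq_of_le_of_card_ge hle hcard).ge hx

lemma card_fiber_eq_of_sum_pow_eq {ι : Type*} [Fintype ι] {q n : ℕ}
    (hι : Fintype.card ι < q) {σ s : ι → Fin n}
    (h : ∑ t, q ^ (σ t : ℕ) = ∑ t, q ^ (s t : ℕ)) (i : Fin n) :
    #{t | σ t = i} = #{t | s t = i} := by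
  have hlt (r : ι → Fin n) (i : Fin n) : #{t | r t = i} < q := (card_le_univ _).trans_lt hι
  have hsum (r : ι → Fin n) : ∑ t, q ^ (r t : ℕ) = ∑ i, #{t | r t = i} * q ^ (i : ℕ) := by
    simp [← sum_fiberwise' univ r (fun i ↦ q ^ (i : ℕ))]
  let digits (r : ι → Fin n) : Fin n → Fin q := fun i ↦ ⟨#{t | r t = i}, hlt r i⟩
  have hdigits : digits σ = digits s := finFunctionFinEquiv.injective <| Fin.ext <| by
    simpa only [finFunctionFinEquiv_apply, digits, hsum] using h
  exact congrArg Fin.val (congrFun hdigits i)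

lemma exists_perm_eq_comp_of_sum_pow_eq {ι : Type*} [Fintype ι] {q n : ℕ}
    (hι : Fintype.card ι < q) {σ s : ι → Fin n} (hs : Injective s)
    (h : ∑ t, q ^ (σ t : ℕ) = ∑ t, q ^ (s t : ℕ)) : ∃ τ : Equiv.Perm ι, σ = s ∘ τ := by
  have hfib := card_fiber_eq_of_sum_pow_eq hι h
  have hmem (t : ι) : ∃ t', s t' = σ t := by
    have hpos : 0 < #{t' | s t' = σ t} := hfib (σ t) ▸ card_pos.2 ⟨t, by simp⟩
    simpa [Finset.Nonempty] using card_pos.1 hpos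
  choose τ hτ using hmem
  have hσ : Injective σ := fun t t' htt' ↦
    card_le_one.1 ((hfib (σ t)).trans_le <| card_le_one.2 fun a ha b hb ↦ hs (by simp_all))
      t (by simp) t' (by simp [htt'])
  have hτ_inj : Injective τ := fun t t' htt' ↦ hσ (by rw [← hτ, ← hτ, htt'])
  exact ⟨Equiv.ofBijective τ (Finite.injective_iff_bijective.1 hτ_inj), funext fun t ↦ (hτ t).symm⟩

lemma pow_three_eq_one_of_sq_eq_add_one {R : Type*} [CommRing R] [CharP R 2] {w : R}
    (hw2 : w ^ 2 = w + 1) : w ^ 3 = 1 := by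
  linear_combination (w + 1) * hw2 + w * CharTwo.two_eq_zero (R := R)

lemma pow_pow_eq_self {M : Type*} [Monoid M] {q : ℕ} {x : M} (hx : x ^ q = x) (i : ℕ) :
    x ^ q ^ i = x := by
  simpa only [pow_iterate, IsFixedPt] using IsFixedPt.iterate (f := (· ^ q)) hx i

lemma natCast_card_addSubgroup_eq_zero {R : Type*} [Ring R] [NoZeroDivisors R] (H : AddSubgroup R)
    {x : R} (hx : x ∈ H) (hx0 : x ≠ 0) : (Nat.card H : R) = 0 := by
  have h : Nat.card H • x = 0 := congrArg Subtype.val (card_nsmul_eq_zero' (x := (⟨x, hx⟩ : H)))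
  simpa [hx0] using h

lemma sum_pow_val_lt {ι : Type*} [Fintype ι] {q n : ℕ} (hq : 1 < q) (hn : 1 < n)
    (hι : Fintype.card ι < q) (σ : ι → Fin n) : ∑ t, q ^ (σ t : ℕ) < q ^ n - 1 := by
  have hle : ∑ t, q ^ (σ t : ℕ) ≤ (q - 1) * q ^ (n - 1) :=
    (sum_le_card_nsmul _ _ (q ^ (n - 1)) fun t _ ↦
      Nat.pow_le_pow_right (by omega) (by omega)).trans
      (Nat.mul_le_mul_right _ (Nat.le_sub_one_of_lt hι))
  have hsplit : (q - 1) * q ^ (n - 1) + q ^ (n - 1) = q ^ n := by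
    rw [← Nat.succ_mul, Nat.succ_eq_add_one, Nat.sub_add_cancel (by omega), mul_comm,
      pow_sub_one_mul (by omega)]
  have hpow : 1 < q ^ (n - 1) := Nat.one_lt_pow (by omega) hq
  omega

section Slopes

variable {K : Type*} [Field K]

/-- The linear set `L_f` of points of `PG(1, K)` spanned by the vectors `(x, f x)`. -/
def linearSet (f : K → K) : Set (Submodule K (K × K)) :=
  {W | ∃ x : K, x ≠ 0 ∧ W = Submodule.span K {(x, f x)}}

/-- The subset `U_f` of `K × K`. -/
def graphSet (f : K → K) : Set (K × K) := {u | ∃ x : K, u = (x, f x)}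

/-- The affine coordinates `m` of the points `⟨(1, m)⟩` of the linear set `L_f`. -/
def slopes (f : K → K) : Set K := Set.range fun u : Kˣ ↦ f u / u

lemma span_mem_linearSet_iff {f : K → K} {m : K} :
    Submodule.span K {(1, m)} ∈ linearSet f ↔ m ∈ slopes f := by
  constructor
  · rintro ⟨x, hx, h⟩
    obtain ⟨c, hc⟩ := Submodule.mem_span_singleton.1 (h ▸ Submodule.mem_span_singleton_self _)
    obtain ⟨hcx, hcm⟩ : c * x = 1 ∧ c * f x = m := by simpa using hc
    refine ⟨Units.mk0 x hx, ?_⟩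
    rw [← hcm, eq_inv_of_mul_eq_one_left hcx]
    simp [div_eq_inv_mul]
  · rintro ⟨u, rfl⟩
    refine ⟨u, u.ne_zero, ?_⟩
    rw [← Submodule.span_singleton_smul_eq u.isUnit]
    simp [mul_div_cancel₀]

lemma slopes_eq_of_linearSet_eq {f g : K → K} (h : linearSet f = linearSet g) :
    slopes f = slopes g := by
  ext m
  rw [← span_mem_linearSet_iff, h, span_mem_linearSet_iff]

lemma smul_graphSet_eq {f g : K → K} {l : K} (hl : l ≠ 0) (h : ∀ x, l * g x = f (l * x)) :
    l • graphSet g = graphSet f := by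
  ext ⟨x, y⟩
  rw [Set.mem_smul_set_iff_inv_smul_mem₀ hl]
  simp only [graphSet, Set.mem_ofPred_eq, Prod.smul_mk, smul_eq_mul, Prod.mk.injEq]
  constructor
  · rintro ⟨_, rfl, hy⟩
    rw [← mul_inv_cancel_left₀ hl y, hy, h, mul_inv_cancel_left₀ hl]
    exact ⟨_, rfl, rfl⟩
  · rintro ⟨_, rfl, rfl⟩
    refine ⟨_, rfl, ?_⟩
    rw [inv_mul_eq_iff_eq_mul₀ hl, h, mul_inv_cancel_left₀ hl]

variable [Fintype K] [DecidableEq K]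

lemma natCast_card_slope_fiber (f : K →+ K) {m : K} (hm : m ∈ slopes f) :
    (#{u : Kˣ | f u / u = m} : K) = -1 := by
  let H : AddSubgroup K := (f - AddMonoidHom.mulLeft m).ker
  have mem_H (x : K) : x ∈ H ↔ f x = m * x := by simp [H, AddMonoidHom.mem_ker, sub_eq_zero]
  have hcard : Nat.card H = #{u : Kˣ | f u / u = m} + 1 := by
    have hH : ({x | x ∈ H} : Finset K) =
        insert 0 (({u : Kˣ | f u / u = m} : Finset Kˣ).map ⟨Units.val, Units.val_injective⟩) := by
      ext x
      rcases eq_or_ne x 0 with rfl | hx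
      · simp [H.zero_mem]
      · lift x to Kˣ using hx.isUnit
        simp [mem_H, div_eq_iff]
    rw [Nat.card_eq_fintype_card, Fintype.card_subtype, hH, card_insert_of_notMem (by simp),
      card_map]
  obtain ⟨u, rfl⟩ := hm
  have h0 := natCast_card_addSubgroup_eq_zero H ((mem_H u).2 (by simp)) u.ne_zero
  rw [hcard, Nat.cast_succ] at h0
  exact eq_neg_of_add_eq_zero_left h0

lemma sum_slope_eq_neg_sum_slopes (f : K →+ K) (F : K → K) :
    ∑ u : Kˣ, F (f u / u) = -∑ m ∈ (slopes f).toFinite.toFinset, F m := by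
  rw [sum_comp, ← sum_neg_distrib]
  refine sum_congr (by ext; simp [slopes]) fun m hm ↦ ?_
  rw [nsmul_eq_mul, natCast_card_slope_fiber f (by simpa using hm), neg_one_mul]

end Slopes

section Linearized

variable {K : Type*} [Field K] {q n : ℕ}

/-- The `q`-linearized polynomial with coefficients `a`, as a function on `K`. -/
def linearized (q : ℕ) (a : Fin n → K) (x : K) : K := ∑ i, a i * x ^ q ^ (i : ℕ)

/-- The Dickson matrix of `linearized q a`, whose row `i` holds the coefficients of its `q ^ i`-th
power when `K` has order `q ^ n`. -/
def dickson [NeZero n] (q : ℕ) (a : Fin n → K) : Matrix (Fin n) (Fin n) K :=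
  .of fun i j ↦ a (j - i) ^ q ^ (i : ℕ)

/-- The coefficients of the adjoint of `linearized q a` when `K` has order `q ^ n`; the index `-i`
is taken modulo `n`. -/
def adjoint [NeZero n] (q : ℕ) (a : Fin n → K) (i : Fin n) : K := a (-i) ^ q ^ (i : ℕ)

/-- Coefficientwise form of `l * g x = f (l * x)`, where `f` and `g` are the linearized polynomials
with coefficients `a` and `b`; it implies `l • U_g = U_f`. -/
def IsTwist (q : ℕ) (l : K) (a b : Fin n → K) : Prop :=
  ∀ i, l * b i = a i * l ^ q ^ (i : ℕ)

lemma IsTwist.smul_graphSet_eq {a b : Fin n → K} {l : K} (h : IsTwist q l a b) (hl : l ≠ 0) :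
    l • graphSet (linearized q b) = graphSet (linearized q a) :=
  LinearSet.smul_graphSet_eq hl fun x ↦ by
    simp only [linearized, mul_sum, mul_pow, ← mul_assoc, h _]

/-- The coefficients of the paper's polynomial `f_w`. -/
def fwCoeff (w : K) : Fin 5 → K := ![1, w, 0, w, 1]

lemma linearized_fwCoeff (q : ℕ) (w x : K) :
    linearized q (fwCoeff w) x = x ^ q ^ 4 + w * x ^ q ^ 3 + w * x ^ q + x := by
  have h : linearized q (fwCoeff w) x = x + w * x ^ q + w * x ^ q ^ 3 + x ^ q ^ 4 := by
    simp [linearized, fwCoeff, Fin.sum_univ_five]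
  rw [h]
  ring

lemma linearized_adjoint_fwCoeff (hq : q ≠ 0) {w : K} (hw : w ^ q = w) (x : K) :
    linearized q (adjoint q (fwCoeff w)) x = x + x ^ q + w * x ^ q ^ 2 + w * x ^ q ^ 4 := by
  have hadj : adjoint q (fwCoeff w) = ![1, 1, w, 0, w] := by
    ext i
    fin_cases i <;> simp [adjoint, fwCoeff, pow_pow_eq_self hw, hq]
  simp [hadj, linearized, Fin.sum_univ_five]

end Linearized

section Frobenius

variable {K : Type*} [Field K] [Fintype K] {q n : ℕ}

lemma exists_ringHom_eq_pow [NeZero n] (hK : Fintype.card K = q ^ n) (i : ℕ) :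
    ∃ φ : K →+* K, ∀ x, φ x = x ^ q ^ i := by
  obtain ⟨p, _, m, hp, hm⟩ := FiniteField.card' K
  obtain ⟨e, -, rfl⟩ := (Nat.dvd_prime_pow hp).1 (hm ▸ hK ▸ dvd_pow_self q (NeZero.ne n))
  have := Fact.mk hp
  exact ⟨iterateFrobenius K p (e * i), fun x ↦ by rw [iterateFrobenius_def, pow_mul]⟩

lemma pow_pow_val_add [NeZero n] (hK : Fintype.card K = q ^ n) (x : K) (i j : Fin n) :
    x ^ q ^ ((i + j : Fin n) : ℕ) = (x ^ q ^ (i : ℕ)) ^ q ^ (j : ℕ) := by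
  rw [← pow_mul, ← pow_add, Fin.val_add]
  nth_rw 2 [← Nat.mod_add_div (i + j : ℕ) n]
  rw [pow_add, pow_mul, pow_mul, ← hK, FiniteField.pow_card_pow]

lemma eq_pow_of_pow_eq (hK : Fintype.card K = q ^ n) {x y : K} {i j : ℕ} (hij : i + j = n)
    (h : x ^ q ^ i = y) : x = y ^ q ^ j := by
  rw [← h, ← pow_mul, ← pow_add, hij, ← hK, FiniteField.pow_card]

lemma one_lt_of_card_eq_pow (hK : Fintype.card K = q ^ n) : 1 < q :=
  lt_of_pow_lt_pow_left₀ n q.zero_le (by rw [one_pow, ← hK]; exact Fintype.one_lt_card)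

lemma exists_pow_eq_mul_of_norm_eq_one [NeZero n] (hK : Fintype.card K = q ^ n) {c : K}
    (hc : c ^ ∑ i ∈ range n, q ^ i = 1) : ∃ l : K, l ≠ 0 ∧ l ^ q = c * l := by
  have hq := one_lt_of_card_eq_pow hK
  have hcard : Nat.card Kˣ = (q - 1) * ∑ i ∈ range n, q ^ i := by
    rw [Nat.card_units, Nat.card_eq_fintype_card, hK, mul_comm, geom_sum_mul_of_one_le hq.le]
  have hsum : ∑ i ∈ range n, q ^ i ≠ 0 := (geom_sum_pos (by omega) (NeZero.ne n)).ne'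
  lift c to Kˣ using IsUnit.of_pow_eq_one hc hsum
  obtain ⟨y, rfl⟩ := exists_pow_eq_of_pow_eq_one hcard (Units.ext (by simpa using hc))
  refine ⟨y, y.ne_zero, ?_⟩
  rw [Units.val_pow_eq_pow_val, pow_sub_one_mul (by omega)]

lemma sum_units_pow_div_pow [DecidableEq K] {k m : ℕ} (hk : k < Fintype.card K - 1)
    (hm : m < Fintype.card K - 1) :
    ∑ u : Kˣ, (u : K) ^ k / (u : K) ^ m = if k = m then -1 else 0 := by
  have hpow (u : Kˣ) : (u : K) ^ k / (u : K) ^ m = (u : K) ^ (k + (Fintype.card K - 1 - m)) := by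
    rw [div_eq_iff (pow_ne_zero m u.ne_zero), ← pow_add, add_assoc, Nat.sub_add_cancel hm.le,
      pow_add, FiniteField.pow_card_sub_one_eq_one _ u.ne_zero, mul_one]
  have hdvd : Fintype.card K - 1 ∣ k + (Fintype.card K - 1 - m) ↔ k = m := by
    constructor
    · intro h
      have := Nat.eq_of_dvd_of_lt_two_mul (by omega) h (by omega)
      omega
    · rintro rfl
      rw [Nat.add_sub_cancel' hm.le]
  simp_rw [hpow, FiniteField.sum_pow_units, hdvd]

variable [NeZero n]

lemma linearized_add (hK : Fintype.card K = q ^ n) (a : Fin n → K) (x y : K) :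
    linearized q a (x + y) = linearized q a x + linearized q a y := by
  have hadd (i : ℕ) : (x + y) ^ q ^ i = x ^ q ^ i + y ^ q ^ i := by
    obtain ⟨φ, hφ⟩ := exists_ringHom_eq_pow hK i
    simp only [← hφ, map_add]
  simp only [linearized, hadd, mul_add, sum_add_distrib]

lemma linearized_pow (hK : Fintype.card K = q ^ n) (a : Fin n → K) (x : K) (i : Fin n) :
    linearized q a x ^ q ^ (i : ℕ) = ∑ j, dickson q a i j * x ^ q ^ (j : ℕ) := by
  obtain ⟨φ, hφ⟩ := exists_ringHom_eq_pow hK i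
  rw [linearized, ← hφ, map_sum,
    ← Equiv.sum_comp (Equiv.addRight i) fun j ↦ dickson q a i j * x ^ q ^ (j : ℕ)]
  simp [hφ, dickson, mul_pow, pow_pow_val_add hK]

lemma dickson_adjoint (hK : Fintype.card K = q ^ n) (a : Fin n → K) :
    dickson q (adjoint q a) = (dickson q a)ᵀ := by
  ext i j
  simp [dickson, adjoint, ← pow_pow_val_add hK]

theorem sum_prod_slope_pow [DecidableEq K] (hn : 1 < n) (hK : Fintype.card K = q ^ n)
    (a : Fin n → K) {ι : Type*} [Fintype ι] [DecidableEq ι] (hι : Fintype.card ι < q)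
    {s : ι → Fin n} (hs : Injective s) :
    ∑ u : Kˣ, ∏ t, (linearized q a u / u) ^ q ^ (s t : ℕ) =
      -((dickson q a).submatrix s s).permanent := by
  have hexpand (u : Kˣ) : ∏ t, (linearized q a u / u) ^ q ^ (s t : ℕ) =
      ∑ σ : ι → Fin n, (∏ t, dickson q a (s t) (σ t)) *
        ((u : K) ^ (∑ t, q ^ (σ t : ℕ)) / (u : K) ^ (∑ t, q ^ (s t : ℕ))) := by
    simp only [div_pow, prod_div_distrib, linearized_pow hK, prod_univ_sum,
      Fintype.piFinset_univ, prod_mul_distrib, prod_pow_eq_pow_sum, sum_div, mul_div_assoc]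
  have hsum (σ : ι → Fin n) :
      ∑ u : Kˣ, (u : K) ^ (∑ t, q ^ (σ t : ℕ)) / (u : K) ^ (∑ t, q ^ (s t : ℕ)) =
        if σ ∈ univ.image fun τ : Equiv.Perm ι ↦ s ∘ τ then -1 else 0 := by
    have hlt (σ : ι → Fin n) : ∑ t, q ^ (σ t : ℕ) < Fintype.card K - 1 :=
      hK ▸ sum_pow_val_lt (one_lt_of_card_eq_pow hK) hn hι σ
    rw [sum_units_pow_div_pow (hlt σ) (hlt s)]
    refine if_congr ⟨fun h ↦ ?_, fun h ↦ ?_⟩ rfl rfl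
    · obtain ⟨τ, rfl⟩ := exists_perm_eq_comp_of_sum_pow_eq hι hs h
      simp
    · obtain ⟨τ, -, rfl⟩ := mem_image.1 h
      exact Equiv.sum_comp τ fun t ↦ q ^ (s t : ℕ)
  have hinj : Injective fun τ : Equiv.Perm ι ↦ s ∘ τ := fun _ _ h ↦
    DFunLike.coe_injective (hs.comp_left h)
  simp_rw [hexpand]
  rw [sum_comm, ← Matrix.permanent_transpose, Matrix.permanent]
  simp_rw [← mul_sum, hsum, mul_ite, mul_zero, sum_ite_mem, univ_inter]
  rw [sum_image hinj.injOn]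
  simp

lemma IsTwist.of_adjoint (hK : Fintype.card K = q ^ n) {a b : Fin n → K} {l : K} (hl : l ≠ 0)
    (h : IsTwist q l a (adjoint q b)) : IsTwist q l⁻¹ (adjoint q a) b := by
  intro i
  have hi : l ^ q ^ (i : ℕ) * b i = a (-i) ^ q ^ (i : ℕ) * l := by
    have := congrArg (· ^ q ^ (i : ℕ)) (h (-i))
    simpa only [adjoint, neg_neg, mul_pow, ← pow_pow_val_add hK, neg_add_cancel, Fin.val_zero,
      pow_zero, pow_one] using this
  rw [adjoint, inv_pow, ← div_eq_mul_inv, eq_div_iff (pow_ne_zero _ hl), mul_assoc,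
    mul_comm (b i), hi, mul_comm, mul_inv_cancel_right₀ hl]

end Frobenius

/-- Equality of the principal permanental minors of `M` and `N` of order less than `d`. A principal
submatrix is given by an enumeration `s` of its rows, whose order does not affect the permanent. -/
def PrincipalPermanentEq {m R : Type*} [CommSemiring R] (d : ℕ) (M N : Matrix m m R) : Prop :=
  ∀ r < d, ∀ s : Fin r → m, Injective s →
    (M.submatrix s s).permanent = (N.submatrix s s).permanent

namespace PrincipalPermanentEq

variable {m R : Type*} {d : ℕ}

lemma transpose_left [CommSemiring R] {M N : Matrix m m R} (h : PrincipalPermanentEq d M N) :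
    PrincipalPermanentEq d Mᵀ N := fun r hr s hs ↦ by
  simpa only [← Matrix.transpose_submatrix, Matrix.permanent_transpose] using h r hr s hs

lemma diag [CommSemiring R] {M N : Matrix m m R} (h : PrincipalPermanentEq d M N) (hd : 1 < d)
    (i : m) : M i i = N i i := by
  simpa [Matrix.permanent] using h 1 hd ![i] (injective_of_subsingleton _)

variable [CommRing R] {M N : Matrix m m R}

lemma two_cycle (h : PrincipalPermanentEq d M N) (hd : 2 < d) {i j : m} (hij : i ≠ j) :
    M i j * M j i = N i j * N j i := by
  have hperm := h 2 hd ![i, j] (by simp [Injective, Fin.forall_fin_two, hij, hij.symm])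
  simp only [permanent_fin_two] at hperm
  simpa [h.diag (by omega : 1 < d)] using hperm

lemma three_cycle (h : PrincipalPermanentEq d M N) (hd : 3 < d) {i j k : m} (hij : i ≠ j)
    (hik : i ≠ k) (hjk : j ≠ k) :
    M i j * M j k * M k i + M i k * M k j * M j i =
      N i j * N j k * N k i + N i k * N k j * N j i := by
  have hperm := h 3 hd ![i, j, k] (by
    simp [Injective, Fin.forall_fin_succ, hij, hik, hjk, hij.symm, hik.symm, hjk.symm])
  simp only [permanent_fin_three] at hperm
  simpa [h.diag (by omega : 1 < d), h.two_cycle (by omega : 2 < d), hij, hik, hjk] using hperm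

end PrincipalPermanentEq

section Invariants

variable {K : Type*} [Field K] [Fintype K] {q n : ℕ}

theorem principalPermanentEq_of_linearSet_eq [NeZero n] (hn : 1 < n) (hK : Fintype.card K = q ^ n)
    {a b : Fin n → K} (h : linearSet (linearized q b) = linearSet (linearized q a)) :
    PrincipalPermanentEq q (dickson q b) (dickson q a) := by
  classical
  intro r hr s hs
  have hr' : Fintype.card (Fin r) < q := by rwa [Fintype.card_fin]
  have hsum (c : Fin n → K) : ((dickson q c).submatrix s s).permanent =
      ∑ m ∈ (slopes (linearized q c)).toFinite.toFinset, ∏ t, m ^ q ^ (s t : ℕ) := by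
    have := sum_slope_eq_neg_sum_slopes (AddMonoidHom.mk' _ (linearized_add hK c))
      fun m ↦ ∏ t, m ^ q ^ (s t : ℕ)
    rw [← neg_inj, ← sum_prod_slope_pow hn hK c hr' hs]
    exact this
  simp only [hsum, slopes_eq_of_linearSet_eq h]

end Invariants

section Quintic

variable {K : Type*} [Field K] [Fintype K] {q : ℕ}

lemma pow_geom_sum_eq_one_of_cycles (hK : Fintype.card K = q ^ 5) {w x y z : K}
    (hw : w ^ q = w) (hw3 : w ^ 3 = 1) (hxz : x * z ^ q = w) (hxxy : x * x ^ q * y ^ q ^ 2 = 1)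
    (hyzy : y * z ^ q * y ^ q ^ 3 = w ^ 2) :
    (x * w ^ 2) ^ ∑ i ∈ range 5, q ^ i = 1 := by
  have hxxy₁ : x ^ q * x ^ q ^ 2 * y ^ q ^ 3 = 1 :=
    calc x ^ q * x ^ q ^ 2 * y ^ q ^ 3 = (x * x ^ q * y ^ q ^ 2) ^ q := by ring
      _ = 1 := by rw [hxxy, one_pow]
  have hxxy₃ : x ^ q ^ 3 * x ^ q ^ 4 * y = 1 :=
    calc x ^ q ^ 3 * x ^ q ^ 4 * y = (x * x ^ q * y ^ q ^ 2) ^ q ^ 3 := by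
          rw [mul_pow, mul_pow, ← pow_mul x q, ← pow_succ',
            ← eq_pow_of_pow_eq (i := 2) (j := 3) hK rfl rfl]
      _ = 1 := by rw [hxxy, one_pow]
  have hnorm : x ^ ∑ i ∈ range 5, q ^ i = w ^ 2 := by
    have hsum : x ^ ∑ i ∈ range 5, q ^ i = x * x ^ q * x ^ q ^ 2 * x ^ q ^ 3 * x ^ q ^ 4 := by
      simp only [sum_range_succ, range_zero, sum_empty, zero_add, pow_zero, pow_one, pow_add]
    have : w ^ 2 * x ^ ∑ i ∈ range 5, q ^ i = w := by
      rw [hsum, ← hyzy]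
      calc
        _ = x * z ^ q * (x ^ q ^ 3 * x ^ q ^ 4 * y) * (x ^ q * x ^ q ^ 2 * y ^ q ^ 3) := by ring
        _ = w := by rw [hxz, hxxy₁, hxxy₃, mul_one, mul_one]
    linear_combination w * this - (x ^ ∑ i ∈ range 5, q ^ i) * hw3
  have hwN : w ^ ∑ i ∈ range 5, q ^ i = w ^ 5 := by
    simp only [← prod_pow_eq_pow_sum, pow_pow_eq_self hw, prod_const, card_range]
  rw [mul_pow, hnorm, pow_right_comm, hwN, ← pow_mul, ← pow_add, pow_mul w 3 4, hw3, one_pow]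

lemma exists_twist_of_cycles (hK : Fintype.card K = q ^ 5) {w x y z : K}
    (hw : w ^ q = w) (hw3 : w ^ 3 = 1) (hxz : x * z ^ q = w) (hxxy : x * x ^ q * y ^ q ^ 2 = 1)
    (hyzy : y * z ^ q * y ^ q ^ 3 = w ^ 2) :
    ∃ l : K, l ≠ 0 ∧ l * x = w * l ^ q ∧ l * y = w * l ^ q ^ 3 ∧ l * z = l ^ q ^ 4 := by
  obtain ⟨l, hl, hlq⟩ := exists_pow_eq_mul_of_norm_eq_one hK
    (pow_geom_sum_eq_one_of_cycles hK hw hw3 hxz hxxy hyzy)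
  have hlx : l * x = w * l ^ q := by linear_combination -w * hlq - x * l * hw3
  have hlz : (l * z) ^ q = l := by
    rw [mul_pow, hlq]
    linear_combination w ^ 2 * l * hxz + l * hw3
  have hlq2 : l ^ q ^ 2 = w * (x * x ^ q) * l := by
    calc l ^ q ^ 2 = (l ^ q) ^ q := by rw [sq, pow_mul]
      _ = x ^ q * w ^ 2 * (x * w ^ 2 * l) := by
        rw [hlq, mul_pow, mul_pow, hlq, pow_right_comm w, hw]
      _ = w * (x * x ^ q) * l := by linear_combination x * x ^ q * l * w * hw3
  have hly : (l * y) ^ q ^ 2 = w * l := by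
    rw [mul_pow, hlq2]
    linear_combination w * l * hxxy
  refine ⟨l, hl, hlx, ?_, ?_⟩
  · rw [eq_pow_of_pow_eq (j := 3) hK rfl hly, mul_pow, pow_pow_eq_self hw]
  · exact eq_pow_of_pow_eq (i := 1) hK rfl (by rwa [pow_one])

lemma exists_twist_of_principalPermanentEq (hq : 3 < q) (hK : Fintype.card K = q ^ 5) {w : K}
    (hw : w ^ q = w) (hw3 : w ^ 3 = 1) {b : Fin 5 → K}
    (h : PrincipalPermanentEq q (dickson q b) (dickson q (fwCoeff w))) (hb2 : b 2 = 0) :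
    ∃ l : K, l ≠ 0 ∧ IsTwist q l (fwCoeff w) b := by
  have hq0 : q ≠ 0 := by omega
  have hneg1 : (-1 : Fin 5) = 4 := rfl
  have hneg2 : (-2 : Fin 5) = 3 := rfl
  have h0 : b 0 = 1 := by simpa [dickson, fwCoeff] using h.diag (by omega) 0
  have hxz : b 1 * b 4 ^ q = w := by
    simpa [dickson, fwCoeff, hneg1] using h.two_cycle (by omega) (show (0 : Fin 5) ≠ 1 by decide)
  have hxxy : b 1 * b 1 ^ q * b 3 ^ q ^ 2 = 1 := by
    rw [← hw3]
    simpa [dickson, fwCoeff, hb2, hneg2, pow_pow_eq_self hw, hw, pow_three'] using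
      h.three_cycle hq (i := 0) (j := 1) (k := 2) (by decide) (by decide) (by decide)
  have hyzy : b 3 * b 4 ^ q * b 3 ^ q ^ 3 = w ^ 2 := by
    simpa [dickson, fwCoeff, hb2, hneg1, pow_pow_eq_self hw, hq0, sq, mul_right_comm] using
      h.three_cycle hq (i := 0) (j := 1) (k := 3) (by decide) (by decide) (by decide)
  obtain ⟨l, hl, hx, hy, hz⟩ := exists_twist_of_cycles hK hw hw3 hxz hxxy hyzy
  exact ⟨l, hl, by simp [IsTwist, fwCoeff, Fin.forall_fin_succ, h0, hb2, hx, hy, hz]⟩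

lemma exists_twist_or_twist_adjoint (hq : 3 < q) (hK : Fintype.card K = q ^ 5) {w : K}
    (hw : w ^ q = w) (hw3 : w ^ 3 = 1) {b : Fin 5 → K}
    (h : PrincipalPermanentEq q (dickson q b) (dickson q (fwCoeff w))) :
    ∃ l : K, l ≠ 0 ∧
      (IsTwist q l (fwCoeff w) b ∨ IsTwist q l (adjoint q (fwCoeff w)) b) := by
  have hq0 : q ≠ 0 := by omega
  have hneg2 : (-2 : Fin 5) = 3 := rfl
  have h02 : b 2 = 0 ∨ b 3 = 0 := by
    simpa [dickson, fwCoeff, hneg2, hq0] using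
      h.two_cycle (by omega) (show (0 : Fin 5) ≠ 2 by decide)
  rcases h02 with hb2 | hb3
  · obtain ⟨l, hl, htwist⟩ := exists_twist_of_principalPermanentEq hq hK hw hw3 h hb2
    exact ⟨l, hl, .inl htwist⟩
  · have hadj : PrincipalPermanentEq q (dickson q (adjoint q b)) (dickson q (fwCoeff w)) := by
      simpa only [dickson_adjoint hK] using h.transpose_left
    obtain ⟨l, hl, htwist⟩ := exists_twist_of_principalPermanentEq hq hK hw hw3 hadj
      (by simp [adjoint, hneg2, hb3, hq0])
    exact ⟨l⁻¹, inv_ne_zero hl, .inr (htwist.of_adjoint hK hl)⟩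

end Quintic

end LinearSet

open LinearSet in
theorem stmt_10_general {q : ℕ} (hq : 3 < q) {K : Type*} [Field K] [Fintype K]
    (hK : Fintype.card K = q ^ 5) {w : K} (hw : w ^ q = w) (hw3 : w ^ 3 = 1) {fw fhat : K → K}
    (hfw : fw = fun x => x ^ q ^ 4 + w * x ^ q ^ 3 + w * x ^ q + x)
    (hfhat : fhat = fun x => x + x ^ q + w * x ^ q ^ 2 + w * x ^ q ^ 4)
    {b : ℕ → K} {g : K → K} (hg : g = fun x => ∑ i ∈ Finset.range 5, b i * x ^ q ^ i)
    (hLeq : linearSet g = linearSet fw) :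
    ∃ lam : K, lam ≠ 0 ∧ (lam • graphSet g = graphSet fw ∨ lam • graphSet g = graphSet fhat) := by
  have hg' : g = linearized q fun i : Fin 5 ↦ b i := by
    ext x
    rw [hg, linearized, Fin.sum_univ_eq_sum_range fun i ↦ b i * x ^ q ^ i]
  have hfw' : fw = linearized q (fwCoeff w) := by
    ext x
    rw [hfw, linearized_fwCoeff]
  have hfhat' : fhat = linearized q (adjoint q (fwCoeff w)) := by
    ext x
    rw [hfhat, linearized_adjoint_fwCoeff (by omega) hw]
  rw [hg', hfw'] at hLeq
  rw [hg', hfw', hfhat']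
  obtain ⟨l, hl, htwist⟩ := exists_twist_or_twist_adjoint hq hK hw hw3
    (principalPermanentEq_of_linearSet_eq (by norm_num) hK hLeq)
  exact ⟨l, hl, htwist.imp (·.smul_graphSet_eq hl) (·.smul_graphSet_eq hl)⟩

/-- Proposition `prop:simple`, first part: for `q = 2^{2s}`, `w ∈ F_q`
with `w² = w + 1`, `f_w(x) = x^{q^4} + w x^{q^3} + w x^q + x` over `K = F_{q^5}` and its
adjoint `f̂_w(x) = x + x^q + w x^{q^2} + w x^{q^4}`, if `g` is an `F_q`-linearized
polynomial over `K` with `L_g = L_{f_w}` (as sets of projective points, i.e. `K`-lines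
`Submodule.span K {(x, g x)}`), then some `λ ≠ 0` satisfies `λ·U_g = U_{f_w}` or
`λ·U_g = U_{f̂_w}`, where `U_g = {(x, g x) : x ∈ K}`. -/
theorem stmt_10 (s : ℕ) (hs : 1 ≤ s) (q : ℕ) (hq : q = 2 ^ (2 * s))
    (K : Type) [Field K] [Fintype K] (hK : Fintype.card K = q ^ 5)
    (w : K) (hw : w ^ q = w) (hw2 : w ^ 2 = w + 1)
    (fw fhat : K → K)
    (hfw : fw = fun x => x ^ q ^ 4 + w * x ^ q ^ 3 + w * x ^ q + x)
    (hfhat : fhat = fun x => x + x ^ q + w * x ^ q ^ 2 + w * x ^ q ^ 4)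
    (b : ℕ → K) (g : K → K)
    (hg : g = fun x => ∑ i ∈ Finset.range 5, b i * x ^ q ^ i)
    (hLeq : {W : Submodule K (K × K) | ∃ x : K, x ≠ 0 ∧ W = Submodule.span K {(x, g x)}}
          = {W | ∃ x : K, x ≠ 0 ∧ W = Submodule.span K {(x, fw x)}}) :
    ∃ lam : K, lam ≠ 0 ∧
      ((fun u : K × K => lam • u) '' {u : K × K | ∃ x : K, u = (x, g x)}
          = {u : K × K | ∃ x : K, u = (x, fw x)} ∨
       (fun u : K × K => lam • u) '' {u : K × K | ∃ x : K, u = (x, g x)}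
          = {u : K × K | ∃ x : K, u = (x, fhat x)}) := by
  have hK2 : Fintype.card K = 2 ^ (2 * s * 5) := by rw [hK, hq, ← pow_mul]
  have := charP_of_card_eq_prime_pow hK2
  have h3q : 3 < q := hq ▸ (Nat.pow_le_pow_right two_pos (by omega : 2 ≤ 2 * s))
  have hw3 := LinearSet.pow_three_eq_one_of_sq_eq_add_one hw2
  exact stmt_10_general h3q hK hw hw3 hfw hfhat hg hLeq
end

section
/- Let q = 2^{2s} with s ≥ 1, let w ∈ F_q satisfy w² = w + 1, and let f_w(x) = x^{q^4} + w x^{q³} + w x^q + x ∈ F_{q^5}[x], with U_{f_w} = { (x, f_w(x)) : x ∈ F_{q^5} } ⊆ F_{q^5}². For an invertible matrix A = ((a, b), (c, d)) over F_{q^5} and a field automorphism σ of F_{q^5}, the semilinear map (x, y) ↦ A·(σ(x), σ(y)) maps U_{f_w} onto U_{f_w} if and only if c = 0, d = a with a ∈ F_q^*, b satisfies b^{q²} + (w+1)·b^q + b = 0, and σ is an even power of the Frobenius x ↦ x², i.e., σ(x) = x^{4^j} for some j. In particular, the stabilizer of U_{f_w} in ΓL(2, q^5) is isomorphic to (E_{q²}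 × C_{q−1}) ⋊ C_{5s}, where E_{q²} is elementary abelian of order q². -/
/-- The stabilizer of a subset `U ⊆ K × K` inside `ΓL(2, K)`, realised as the subgroup
of additive automorphisms of `K × K` which are semilinear with respect to some field
automorphism of `K` and which map `U` onto itself. -/
def semilinearStab (K : Type*) [Field K] (U : Set (K × K)) :
    Subgroup (Multiplicative (AddAut (K × K))) where
  carrier := {g | (∃ σ : K ≃+* K, ∀ (c : K) (v : K × K), g.toAdd (c • v) = σ c • g.toAdd v) ∧
    ∀ u : K × K, u ∈ U ↔ g.toAdd u ∈ U}
  one_mem' := ⟨⟨RingEquiv.refl K, fun c v => rfl⟩, fun u => Iff.rfl⟩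
  mul_mem' := by
    rintro g₁ g₂ ⟨⟨σ₁, h₁⟩, hU₁⟩ ⟨⟨σ₂, h₂⟩, hU₂⟩
    refine ⟨⟨σ₂.trans σ₁, fun c v => ?_⟩, fun u => ?_⟩
    · show g₁.toAdd (g₂.toAdd (c • v)) = σ₁ (σ₂ c) • g₁.toAdd (g₂.toAdd v)
      rw [h₂, h₁]
    · show u ∈ U ↔ g₁.toAdd (g₂.toAdd u) ∈ U
      rw [hU₂ u, hU₁ (g₂.toAdd u)]
  inv_mem' := by
    rintro g ⟨⟨σ, hσ⟩, hU⟩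
    refine ⟨⟨σ.symm, fun c v => ?_⟩, fun u => ?_⟩
    · apply g.toAdd.injective
      show g.toAdd (g.toAdd.symm (c • v)) = g.toAdd (σ.symm c • g.toAdd.symm v)
      rw [g.toAdd.apply_symm_apply, hσ, g.toAdd.apply_symm_apply, RingEquiv.apply_symm_apply]
    · show u ∈ U ↔ g.toAdd.symm u ∈ U
      rw [hU (g.toAdd.symm u), g.toAdd.apply_symm_apply]

/-!
Let `T` be the `q`-Frobenius of `K`, so that `T ^ 5 = 1`, let `ζ` be a primitive fifth root of unity
with `ζ + ζ⁻¹ = w`, and `f_w = T ^ 4 + w T ^ 3 + w T + 1 = (T + 1) ^ 2 (T ^ 2 + w T + 1)`. The image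
of `f_w` lies in the kernel of `T ^ 2 + (w + 1) T + 1`, i.e. it is spanned, over an extension, by
eigenvectors of `T` with eigenvalues `ζ ^ (±2)`. If `b` lies in this kernel as well, the products
`b * f_w x` only involve the eigenvalues `1` and `ζ ^ (±1)`, the roots of `f_w`, so that
`f_w (b * f_w x) = 0`; this is why such shears stabilize the graph of `f_w`.

Conversely, let a semilinear map with companion `σ` and first row `(a, b)` stabilize the graph and
put `w' = σ w`, one of the two roots `w`, `w + 1` of `X ^ 2 + X + 1`. The powers of `T` are linearly
independent, and the coefficient of `T ^ 2` in the stabilizing identity involves `b` only. If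
`w' = w` it puts `b` in the above kernel, and if `w' = w + 1` it puts `b` in the fixed field of `T`;
in both cases `f_w (b * f_{w'} x) = 0`, and the other coefficients become elementary relations
between `a`, `c`, `d` and `w'` which exclude `w' = w + 1`.

The stabilizer is split over its linear part by `(x, y) ↦ (x ^ 4, y ^ 4)`.
-/

open Polynomial Subgroup

theorem linearIndependent_pow_ringEquiv {R : Type*} [CommRing R] [IsDomain R] (σ : R ≃+* R) :
    LinearIndependent R fun i : Fin (orderOf σ) => ⇑(σ ^ (i : ℕ)) := by
  refine (linearIndependent_monoidHom R R).comp
    (fun i : Fin (orderOf σ) => ((σ ^ (i : ℕ) : R ≃+* R) : R →* R)) fun i j hij => ?_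
  exact Fin.ext (pow_injOn_Iio_orderOf i.2 j.2 (RingEquiv.ext fun x => DFunLike.congr_fun hij x))

theorem nonempty_addEquiv_pi_zmod {A : Type*} [AddCommGroup A] {p n : ℕ} [Fact p.Prime]
    (hp : ∀ x : A, p • x = 0) (hA : Nat.card A = p ^ n) :
    Nonempty (A ≃+ (Fin n → ZMod p)) := by
  have : Module (ZMod p) A := AddCommGroup.zmodModule hp
  have : Finite A := Nat.finite_of_card_ne_zero (by simp [hA, NeZero.ne p])
  have finrank_eq : Module.finrank (ZMod p) A = n := Nat.pow_right_injective
    (Fact.out : p.Prime).two_le ((FiniteField.pow_finrank_eq_natCard p A).trans hA)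
  exact ⟨(Module.finBasisOfFinrankEq (ZMod p) A finrank_eq).equivFun.toAddEquiv⟩

theorem natCard_ker_eq_of_comp_eq_zero {A B C : Type*} [AddGroup A] [AddGroup B] [AddGroup C]
    [Finite A] [Finite B] {f : B →+ C} {g : A →+ B} {m n : ℕ} (hfg : f.comp g = 0)
    (hf : Nat.card f.ker ≤ m) (hg : Nat.card g.ker ≤ n) (hA : Nat.card A = m * n) :
    Nat.card f.ker = m := by
  have range_le : Nat.card g.range ≤ Nat.card f.ker :=
    Nat.card_le_card_of_injective _ (AddSubgroup.inclusion_injective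
      ((AddMonoidHom.range_le_ker_iff g f).2 hfg))
  have card_pos : 0 < m * n := hA ▸ Nat.card_pos
  refine hf.antisymm (Nat.le_of_mul_le_mul_right ?_ (Nat.pos_of_mul_pos_left card_pos))
  calc m * n = Nat.card g.ker * Nat.card g.range := by
        rw [← hA, ← AddSubgroup.index_ker, AddSubgroup.card_mul_index]
    _ ≤ n * Nat.card f.ker := Nat.mul_le_mul hg range_le
    _ = Nat.card f.ker * n := mul_comm _ _

theorem ncard_zeros_linearized_le {R : Type*} [CommRing R] [IsDomain R] {q n : ℕ} (hq : 1 < q)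
    (c : Fin (n + 1) → R) (hc : c (Fin.last n) ≠ 0) :
    {x : R | ∑ i, c i * x ^ q ^ (i : ℕ) = 0}.ncard ≤ q ^ n := by
  set P : R[X] := ∑ i, C (c i) * X ^ q ^ (i : ℕ) with hP
  have natDegree_le : P.natDegree ≤ q ^ n :=
    natDegree_sum_le_of_forall_le _ _ fun i _ => (natDegree_C_mul_X_pow_le _ _).trans
      (Nat.pow_le_pow_right hq.le (Nat.lt_succ_iff.1 i.2))
  have coeff_top : P.coeff (q ^ n) = c (Fin.last n) := by
    rw [hP, finsetSum_coeff, Finset.sum_eq_single_of_mem (Fin.last n) (Finset.mem_univ _)]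
    · simp
    · intro i _ hi
      have : q ^ n ≠ q ^ (i : ℕ) := fun h => hi (Fin.ext (Nat.pow_right_injective hq h).symm)
      simp [coeff_X_pow, this]
  have ne_zero : P ≠ 0 := fun h => hc (by rw [← coeff_top, h, coeff_zero])
  have zeros_eq : {x : R | ∑ i, c i * x ^ q ^ (i : ℕ) = 0} = P.rootSet R := by
    ext x
    rw [mem_rootSet_of_ne ne_zero, coe_aeval_eq_eval, hP]
    simp [eval_finsetSum]
  exact zeros_eq ▸ (ncard_rootSet_le P R).trans natDegree_le

/-! ### Frobenius maps of a finite field -/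

section FiniteField

variable {q n : ℕ}

section Semiring

variable {R : Type*} [Semiring R] {T : R ≃+* R}

theorem pow_apply_of_forall_apply_eq_pow (hT : ∀ x, T x = x ^ q) (k : ℕ) (x : R) :
    (T ^ k) x = x ^ q ^ k := by
  induction k with
  | zero => simp
  | succ k ih => rw [pow_succ', RingAut.mul_apply, ih, hT, ← pow_mul, ← pow_succ]

theorem commute_of_forall_apply_eq_pow (hT : ∀ x, T x = x ^ q) (σ : R ≃+* R) : Commute σ T :=
  RingEquiv.ext fun x => by simp only [RingAut.mul_apply, hT, map_pow]

end Semiring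

theorem one_lt_of_natCard_eq_pow {α : Type*} [Finite α] [Nontrivial α] (hα : Nat.card α = q ^ n) :
    1 < q := by
  by_contra! hq
  exact (hα ▸ Finite.one_lt_card : 1 < q ^ n).not_ge (pow_le_one₀ q.zero_le hq)

variable {K : Type*} [Field K] [Finite K] {T : K ≃+* K}

theorem exists_forall_apply_eq_pow (p : ℕ) [Fact p.Prime] [CharP K p] (σ : K ≃+* K) :
    ∃ n : ℕ, ∀ x, σ x = x ^ p ^ n := by
  let : Algebra (ZMod p) K := ZMod.algebra K p
  have σ_zmod (c : ZMod p) : σ (algebraMap (ZMod p) K c) = algebraMap (ZMod p) K c :=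
    DFunLike.congr_fun (RingHom.ext_zmod ((σ : K →+* K).comp (algebraMap (ZMod p) K)) _) c
  obtain ⟨n, hn⟩ := (FiniteField.bijective_frobeniusAlgEquivOfAlgebraic_pow (ZMod p) K).2
    (AlgEquiv.ofRingEquiv (f := σ) σ_zmod)
  refine ⟨n, fun x => ?_⟩
  calc σ x = (FiniteField.frobeniusAlgEquivOfAlgebraic (ZMod p) K ^ (n : ℕ)) x :=
        (DFunLike.congr_fun hn x).symm
    _ = x ^ p ^ (n : ℕ) := by
        rw [AlgEquiv.coe_pow, FiniteField.coe_frobeniusAlgEquivOfAlgebraic_iterate, ZMod.card]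

theorem orderOf_of_forall_apply_eq_pow (hK : Nat.card K = q ^ n) (hT : ∀ x, T x = x ^ q) :
    orderOf T = n := by
  have := Fintype.ofFinite K
  have hq := one_lt_of_natCard_eq_pow hK
  have n_pos : 0 < n := Nat.pos_of_ne_zero fun hn =>
    (hK ▸ Finite.one_lt_card : 1 < q ^ n).ne' (by rw [hn, pow_zero])
  have pow_eq_one_iff (k : ℕ) : T ^ k = 1 ↔ ∀ x : K, x ^ q ^ k = x := by
    simp only [RingEquiv.ext_iff, pow_apply_of_forall_apply_eq_pow hT, RingAut.one_apply]
  refine (orderOf_eq_iff n_pos).2 ⟨(pow_eq_one_iff n).2 fun x => ?_, fun k k_lt k_pos hk => ?_⟩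
  · rw [← hK, Nat.card_eq_fintype_card, FiniteField.pow_card]
  · have units_pow (x : Kˣ) : x ^ (q ^ k - 1) = 1 := by
      have x_pow : x ^ q ^ k = x := Units.ext ((pow_eq_one_iff k).1 hk x)
      rw [← mul_eq_right (b := x), ← pow_succ, Nat.sub_add_cancel (Nat.one_le_pow _ _ (by lia)),
        x_pow]
    have card_dvd := (FiniteField.forall_pow_eq_one_iff K _).1 units_pow
    rw [← Nat.card_eq_fintype_card, hK] at card_dvd
    have one_lt := Nat.one_lt_pow k_pos.ne' hq
    have card_le := Nat.le_of_dvd (Nat.sub_pos_of_lt one_lt) card_dvd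
    have := Nat.pow_lt_pow_right hq k_lt
    lia

end FiniteField

/-! ### Polynomials in an automorphism of order five -/

section Palindromic

variable {R : Type*} [CommRing R]

theorem apply_five_of_pow_eq_one {T : R ≃+* R} (hT : T ^ 5 = 1) (x : R) :
    T (T (T (T (T x)))) = x :=
  DFunLike.congr_fun hT x

/-- The map `f_w = T ^ 4 + w T ^ 3 + w T + 1`, with the Frobenius map `x ↦ x ^ q` replaced by an
arbitrary automorphism `T`. -/
def palindromicMap (T : R ≃+* R) (w : R) : R →+ R :=
  AddMonoidHom.mk' (fun x => T (T (T (T x))) + w * T (T (T x)) + w * T x + x) fun x y => by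
    simp only [map_add]; ring

/-- The map `T ^ 2 + u T + 1`; for `u = w + 1`, its kernel is the set of admissible entries `b`. -/
def quadraticMap (T : R ≃+* R) (u : R) : R →+ R :=
  AddMonoidHom.mk' (fun x => T (T x) + u * T x + x) fun x y => by simp only [map_add]; ring

/-- The map `T ^ 3 + u T ^ 2 + u T + 1`, for `u ^ 2 = u + 1` in characteristic two the cofactor of
`quadraticMap T u` in the factorisation of `T ^ 5 + 1`. -/
def cubicMap (T : R ≃+* R) (u : R) : R →+ R :=
  AddMonoidHom.mk' (fun x => T (T (T x)) + u * T (T x) + u * T x + x) fun x y => by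
    simp only [map_add]; ring

variable {T : R ≃+* R} {u w w' a b c d : R}

theorem palindromicMap_apply (x : R) :
    palindromicMap T w x = T (T (T (T x))) + w * T (T (T x)) + w * T x + x := rfl

theorem quadraticMap_apply (x : R) : quadraticMap T u x = T (T x) + u * T x + x := rfl

theorem cubicMap_apply (x : R) :
    cubicMap T u x = T (T (T x)) + u * T (T x) + u * T x + x := rfl

theorem map_palindromicMap {σ : R ≃+* R} (hσ : Commute σ T) (x : R) :
    σ (palindromicMap T w x) = palindromicMap T (σ w) (σ x) := by
  have σ_T (y : R) : σ (T y) = T (σ y) := DFunLike.congr_fun hσ y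
  simp only [palindromicMap_apply, map_add, map_mul, σ_T]

theorem mul_mem_ker_quadraticMap (ha : T a = a) (hb : b ∈ (quadraticMap T u).ker) :
    a * b ∈ (quadraticMap T u).ker := by
  rw [AddMonoidHom.mem_ker, quadraticMap_apply] at hb ⊢
  simp only [map_mul, ha]
  linear_combination a * hb

theorem palindromicMap_mul (ha : T a = a) (x : R) :
    palindromicMap T w (a * x) = a * palindromicMap T w x := by
  simp only [palindromicMap_apply, map_mul, ha]
  ring

section CharTwo

variable [CharP R 2]

theorem quadraticMap_comp_cubicMap (hT : T ^ 5 = 1) (hu : T u = u) (hu2 : u ^ 2 = u + 1) :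
    (quadraticMap T u).comp (cubicMap T u) = 0 := by
  ext x
  simp only [AddMonoidHom.comp_apply, quadraticMap_apply, cubicMap_apply, map_add, map_mul, hu,
    apply_five_of_pow_eq_one hT, AddMonoidHom.zero_apply]
  grind

theorem palindromicMap_palindromicMap_add_one (hT : T ^ 5 = 1) (hw : T w = w)
    (hw2 : w ^ 2 = w + 1) (x : R) : palindromicMap T w (palindromicMap T (w + 1) x) = 0 := by
  simp only [palindromicMap_apply, map_add, map_mul, map_one, hw, apply_five_of_pow_eq_one hT]
  grind

theorem palindromicMap_mul_palindromicMap (hT : T ^ 5 = 1) (hw : T w = w)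
    (hw2 : w ^ 2 = w + 1) (hb : b ∈ (quadraticMap T (w + 1)).ker) (x : R) :
    palindromicMap T w (b * palindromicMap T w x) = 0 := by
  rw [AddMonoidHom.mem_ker, quadraticMap_apply] at hb
  have b2 : T (T b) = (w + 1) * T b + b := by grind
  have b3 : T (T (T b)) = (w + 1) * (T b + b) := by
    rw [b2]; simp only [map_add, map_mul, hw, map_one, b2]
    grind
  have b4 : T (T (T (T b))) = T b + (w + 1) * b := by
    rw [b3]; simp only [map_add, map_mul, hw, map_one, b2]
    grind
  simp only [palindromicMap_apply, map_add, map_mul, hw, apply_five_of_pow_eq_one hT]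
  rw [b4, b3]
  grind

theorem apply_eq_self_of_coeff_eq_zero (hT : T ^ 5 = 1) (hw : T w = w) (hw2 : w ^ 2 = w + 1)
    (h : w * (w + 1) * T b + w * T (T (T b)) + (w + 1) * T (T (T (T b))) = 0) :
    T b = b := by
  set z := T b + b with hz
  have T_T_z : T (T z) = w * (T z + z) := by
    apply T.injective
    simp only [hz, map_add, map_mul, hw]
    grind
  have z_eq : w * z = z := by
    have := apply_five_of_pow_eq_one hT z
    simp only [T_T_z, map_add, map_mul, hw] at this
    grind
  have z_zero : z = 0 := by grind
  exact CharTwo.add_eq_zero.1 z_zero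

end CharTwo

section IsDomain

variable [IsDomain R]

theorem eq_zero_of_forall_sum_apply_eq_zero (hT : orderOf T = 5) {c₀ c₁ c₂ c₃ c₄ : R}
    (h : ∀ x, c₀ * x + c₁ * T x + c₂ * T (T x) + c₃ * T (T (T x)) + c₄ * T (T (T (T x))) = 0) :
    c₀ = 0 ∧ c₁ = 0 ∧ c₂ = 0 ∧ c₃ = 0 ∧ c₄ = 0 := by
  have li := linearIndependent_pow_ringEquiv T
  rw [hT, Fintype.linearIndependent_iff] at li
  have coeff_zero := li ![c₀, c₁, c₂, c₃, c₄] (funext fun x => by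
    simpa [Fin.sum_univ_five] using h x)
  exact ⟨coeff_zero 0, coeff_zero 1, coeff_zero 2, coeff_zero 3, coeff_zero 4⟩

theorem middle_coeff_eq_zero (hT : orderOf T = 5) (hw' : T w' = w')
    (h : ∀ x, palindromicMap T w (a * x + b * palindromicMap T w' x) =
      c * x + d * palindromicMap T w' x) :
    w * w' * T b + w * T (T (T b)) + w' * T (T (T (T b))) = 0 := by
  have hT5 : T ^ 5 = 1 := hT ▸ pow_orderOf_eq_one T
  refine (eq_zero_of_forall_sum_apply_eq_zero hT
    (c₀ := a + b + w * T b + w' * T (T (T (T b))) - c - d)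
    (c₁ := w * T a + w' * b + w * T b + w * w' * T (T (T b)) - d * w')
    (c₃ := w * T (T (T a)) + w' * b + w * T (T (T b)) + T (T (T (T b))) - d * w')
    (c₄ := T (T (T (T a))) + b + w * w' * T b + w * w' * T (T (T b)) + T (T (T (T b))) - d)
    fun x => ?_).2.2.1
  have hx := h x
  simp only [palindromicMap_apply, map_add, map_mul, hw', apply_five_of_pow_eq_one hT5] at hx
  linear_combination hx

theorem eq_of_forall_palindromicMap_mul_eq (hT : orderOf T = 5) (hw0 : w ≠ 0)
    (h : ∀ x, palindromicMap T w (a * x) = c * x + d * palindromicMap T w' x) :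
    c = 0 ∧ d = a ∧ T a = a ∧ w * a = w' * a := by
  obtain ⟨h₀, h₁, -, h₃, h₄⟩ := eq_zero_of_forall_sum_apply_eq_zero hT
    (c₀ := a - c - d) (c₁ := w * T a - w' * d) (c₂ := 0) (c₃ := w * T (T (T a)) - w' * d)
    (c₄ := T (T (T (T a))) - d) fun x => by
      have hx := h x
      simp only [palindromicMap_apply, map_mul] at hx
      linear_combination hx
  have T_T_a : T (T a) = a := T.injective (mul_left_cancel₀ hw0 (by linear_combination h₃ - h₁))
  have T_a : T a = a := by
    have hT5 : T ^ 5 = 1 := hT ▸ pow_orderOf_eq_one T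
    have T5_a := apply_five_of_pow_eq_one hT5 a
    rwa [T_T_a, T_T_a] at T5_a
  simp only [T_a] at h₁ h₄
  have d_eq : d = a := by linear_combination -h₄
  exact ⟨by linear_combination -h₀ - d_eq, d_eq, T_a, by linear_combination h₁ + w' * d_eq⟩

variable [CharP R 2]

theorem mem_ker_quadraticMap_of_coeff_eq_zero (hT : T ^ 5 = 1) (hw : T w = w)
    (hw2 : w ^ 2 = w + 1)
    (h : w * w * T b + w * T (T (T b)) + w * T (T (T (T b))) = 0) :
    b ∈ (quadraticMap T (w + 1)).ker := by
  have hw0 : w ≠ 0 := by rintro rfl; simp at hw2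
  set z := quadraticMap T (w + 1) b with hz
  have T_z : T z = w * z := by
    apply T.injective
    apply mul_left_cancel₀ hw0
    simp only [hz, quadraticMap_apply, map_add, map_mul, hw, map_one]
    grind
  have z_eq : w ^ 5 * z = z := by
    have := apply_five_of_pow_eq_one hT z
    simp only [T_z, map_mul, hw] at this
    linear_combination this
  have w_mul_z : w * z = 0 := by grind
  rw [AddMonoidHom.mem_ker, ← hz]
  exact (mul_eq_zero.1 w_mul_z).resolve_left hw0

theorem forall_palindromicMap_eq_iff (hT : orderOf T = 5) (hw : T w = w) (hw2 : w ^ 2 = w + 1)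
    (hw' : w' = w ∨ w' = w + 1) (hac : (a, c) ≠ 0) :
    (∀ x, palindromicMap T w (a * x + b * palindromicMap T w' x) =
      c * x + d * palindromicMap T w' x) ↔
    c = 0 ∧ d = a ∧ a ≠ 0 ∧ T a = a ∧ b ∈ (quadraticMap T (w + 1)).ker ∧ w' = w := by
  have hT5 : T ^ 5 = 1 := hT ▸ pow_orderOf_eq_one T
  have hw0 : w ≠ 0 := by rintro rfl; simp at hw2
  have T_w' : T w' = w' := by obtain rfl | rfl := hw' <;> simp [hw]
  constructor
  · intro h
    have middle := middle_coeff_eq_zero hT T_w' h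
    have absorbed (x : R) : palindromicMap T w (b * palindromicMap T w' x) = 0 := by
      obtain rfl | rfl := hw'
      · exact palindromicMap_mul_palindromicMap hT5 hw hw2
          (mem_ker_quadraticMap_of_coeff_eq_zero hT5 hw hw2 middle) x
      · rw [palindromicMap_mul (apply_eq_self_of_coeff_eq_zero hT5 hw hw2 middle),
          palindromicMap_palindromicMap_add_one hT5 hw hw2, mul_zero]
    have diagonal (x : R) : palindromicMap T w (a * x) = c * x + d * palindromicMap T w' x := by
      rw [← h x, map_add, absorbed, add_zero]
    obtain ⟨rfl, rfl, T_a, w_a⟩ := eq_of_forall_palindromicMap_mul_eq hT hw0 diagonal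
    have a_ne : d ≠ 0 := by rintro rfl; exact hac rfl
    obtain rfl := mul_right_cancel₀ a_ne w_a
    exact ⟨rfl, rfl, a_ne, T_a, mem_ker_quadraticMap_of_coeff_eq_zero hT5 hw hw2 middle, rfl⟩
  · rintro ⟨rfl, rfl, -, T_a, hb, rfl⟩ x
    rw [map_add, palindromicMap_mul_palindromicMap hT5 hw hw2 hb, palindromicMap_mul T_a]
    ring

end IsDomain

end Palindromic

/-! ### Semilinear automorphisms -/

theorem exists_mulEquiv_semidirectProduct {G M C : Type*} [Group G] [Group M] [Group C]
    {N H : Subgroup G} [N.Normal] (hNH : IsComplement' N H) (eN : N ≃* M) (eH : H ≃* C) :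
    ∃ ψ : C →* MulAut M, Nonempty (G ≃* M ⋊[ψ] C) :=
  ⟨_, ⟨(SemidirectProduct.mulEquivSubgroup hNH).symm.trans (SemidirectProduct.congr' eN eH)⟩⟩

section Semilinear

variable {K V : Type*} [Field K] [AddCommGroup V] [Module K V]

/-- The additive automorphism `g` of `V` is semilinear with respect to `σ`. The group
`AddAut V` is written multiplicatively, as in `semilinearStab`. -/
def IsSemilinear (σ : K ≃+* K) (g : Multiplicative (AddAut V)) : Prop :=
  ∀ (c : K) (v : V), g.toAdd (c • v) = σ c • g.toAdd v

variable {σ τ : K ≃+* K} {g h : Multiplicative (AddAut V)}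

namespace IsSemilinear

theorem one : IsSemilinear (1 : K ≃+* K) (1 : Multiplicative (AddAut V)) := fun _ _ => rfl

theorem mul (hg : IsSemilinear σ g) (hh : IsSemilinear τ h) : IsSemilinear (σ * τ) (g * h) :=
  fun c v => show g.toAdd (h.toAdd (c • v)) = σ (τ c) • g.toAdd (h.toAdd v) by rw [hh, hg]

theorem inv (hg : IsSemilinear σ g) : IsSemilinear σ⁻¹ g⁻¹ := fun c v => by
  refine g.toAdd.injective ?_
  change g.toAdd (g.toAdd.symm (c • v)) = g.toAdd (σ.symm c • g.toAdd.symm v)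
  rw [hg, AddEquiv.apply_symm_apply, AddEquiv.apply_symm_apply, RingEquiv.apply_symm_apply]

theorem zpow (hg : IsSemilinear σ g) (k : ℤ) : IsSemilinear (σ ^ k) (g ^ k) := by
  induction k with
  | zero => simpa using one
  | succ k ih => simpa only [zpow_add_one] using ih.mul hg
  | pred k ih => simpa only [zpow_sub_one] using ih.mul hg.inv

theorem unique [Nontrivial V] (hσ : IsSemilinear σ g) (hτ : IsSemilinear τ g) : σ = τ := by
  obtain ⟨v, hv⟩ := exists_ne (0 : V)
  have g_v : g.toAdd v ≠ 0 := g.toAdd.map_ne_zero_iff.2 hv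
  exact RingEquiv.ext fun c => smul_left_injective K g_v ((hσ c v).symm.trans (hτ c v))

end IsSemilinear

variable (K V) in
/-- `GL(V)`, as a group of additive automorphisms of `V`. -/
def linearAddAut : Subgroup (Multiplicative (AddAut V)) where
  carrier := {g | IsSemilinear (1 : K ≃+* K) g}
  one_mem' := .one
  mul_mem' hg hh := by simpa using hg.mul hh
  inv_mem' hg := by simpa using hg.inv

theorem mem_linearAddAut : g ∈ linearAddAut K V ↔ IsSemilinear (1 : K ≃+* K) g := Iff.rfl

theorem normal_linearAddAut_subgroupOf {S : Subgroup (Multiplicative (AddAut V))}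
    (hS : ∀ g ∈ S, ∃ σ : K ≃+* K, IsSemilinear σ g) : ((linearAddAut K V).subgroupOf S).Normal where
  conj_mem n hn g := by
    obtain ⟨σ, hσ⟩ := hS g g.2
    have conj := (hσ.mul (mem_linearAddAut.1 (mem_subgroupOf.1 hn))).mul hσ.inv
    rwa [mul_one, mul_inv_cancel] at conj

theorem exists_mulEquiv_semidirectProduct_of_isSemilinear [Nontrivial V]
    {S : Subgroup (Multiplicative (AddAut V))} {M : Type*} [Group M] {F : K ≃+* K} {f : S}
    {n : ℕ} (hf : IsSemilinear F f.1) (f_order : orderOf f = n) (F_order : orderOf F = n)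
    (hS : ∀ g ∈ S, ∃ σ ∈ zpowers F, IsSemilinear σ g)
    (e : (linearAddAut K V).subgroupOf S ≃* M) :
    ∃ ψ : Multiplicative (ZMod n) →* MulAut M,
      Nonempty (S ≃* M ⋊[ψ] Multiplicative (ZMod n)) := by
  have := normal_linearAddAut_subgroupOf fun g hg => (hS g hg).imp fun _ => And.right
  have hf_zpow (k : ℤ) : IsSemilinear (F ^ k) (f ^ k).1 := by simpa using hf.zpow k
  have compl : IsComplement' ((linearAddAut K V).subgroupOf S) (zpowers f) := by
    refine isComplement'_of_disjoint_and_mul_eq_univ ?_ (Set.eq_univ_of_forall fun g => ?_)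
    · rw [disjoint_def]
      rintro _ linear ⟨k, rfl⟩
      have F_pow : F ^ k = 1 := (hf_zpow k).unique (mem_subgroupOf.1 linear)
      rwa [← orderOf_dvd_iff_zpow_eq_one, F_order, ← f_order, orderOf_dvd_iff_zpow_eq_one] at F_pow
    · obtain ⟨_, ⟨k, rfl⟩, hg⟩ := hS g g.2
      refine ⟨g * (f ^ k)⁻¹, ?_, f ^ k, ⟨k, rfl⟩, inv_mul_cancel_right _ _⟩
      have quot := hg.mul (hf_zpow k).inv
      rwa [mul_inv_cancel] at quot
  have card_zpowers : Nat.card (zpowers f) = n := by rw [Nat.card_zpowers, f_order]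
  subst card_zpowers
  exact exists_mulEquiv_semidirectProduct compl e (zmodCyclicMulEquiv inferInstance).symm

end Semilinear

section Plane

variable {K : Type*} [Field K]

/-- The semilinear map `(x, y) ↦ A (σ x, σ y)` of the plane, for the matrix `A = !![a, b; c, d]`. -/
def matrixSemilinear (a b c d : K) (σ : K ≃+* K) (v : K × K) : K × K :=
  (a * σ v.1 + b * σ v.2, c * σ v.1 + d * σ v.2)

/-- The automorphism `(x, y) ↦ (σ x, σ y)` of the plane. -/
def coordAut : (K ≃+* K) →* Multiplicative (AddAut (K × K)) where
  toFun σ := .ofAdd (AddEquiv.prodCongr (σ : K ≃+ K) σ)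
  map_one' := rfl
  map_mul' _ _ := rfl

/-- The linear automorphism of the plane with matrix `!![a, a * b; 0, a]`, as a function of the pair
`(b, a)`; factoring `a` out of the upper right entry makes this a homomorphism on the product. -/
def scaledShear : Multiplicative K × Kˣ →* Multiplicative (AddAut (K × K)) where
  toFun m := .ofAdd
    { toFun := fun v => (m.2 * (v.1 + m.1.toAdd * v.2), m.2 * v.2)
      invFun := fun v => (m.2⁻¹ * v.1 - m.1.toAdd * (m.2⁻¹ * v.2), m.2⁻¹ * v.2)
      left_inv := fun v => by ext <;> simp
      right_inv := fun v => by ext <;> simp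
      map_add' := fun u v => by ext <;> simp <;> ring }
  map_one' := by ext <;> simp
  map_mul' m n := by ext <;> simp <;> ring

variable {σ : K ≃+* K} {a b c d : K} {g : Multiplicative (AddAut (K × K))}

theorem coordAut_toAdd (σ : K ≃+* K) : ⇑(coordAut σ).toAdd = matrixSemilinear 1 0 0 1 σ := by
  ext1 v
  simp only [matrixSemilinear, one_mul, zero_mul, add_zero, zero_add]
  rfl

theorem scaledShear_toAdd (m : Multiplicative K × Kˣ) :
    ⇑(scaledShear m).toAdd = matrixSemilinear (m.2 : K) (m.2 * m.1.toAdd) 0 m.2 1 := by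
  ext v <;> simp [scaledShear, matrixSemilinear, mul_add, mul_assoc]

theorem injective_coordAut : Function.Injective (coordAut (K := K)) := fun _ _ h =>
  RingEquiv.ext fun x =>
    congrArg Prod.fst (DFunLike.congr_fun (congrArg Multiplicative.toAdd h) (x, 0))

theorem isSemilinear_coordAut (σ : K ≃+* K) : IsSemilinear σ (coordAut σ) :=
  fun c v => Prod.ext (map_mul σ c v.1) (map_mul σ c v.2)

theorem isSemilinear_scaledShear (m : Multiplicative K × Kˣ) :
    IsSemilinear (1 : K ≃+* K) (scaledShear m) := fun c v => by
  ext <;> simp [scaledShear] <;> ring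

theorem injective_scaledShear : Function.Injective (scaledShear (K := K)) := by
  refine (injective_iff_map_eq_one _).2 fun m hm => ?_
  have image : ((m.2 * m.1.toAdd, m.2) : K × K) = (0, 1) := by
    simpa [scaledShear] using DFunLike.congr_fun (congrArg Multiplicative.toAdd hm) (0, 1)
  obtain ⟨hb, ha⟩ := Prod.ext_iff.1 image
  rw [Units.val_eq_one] at ha
  exact Prod.ext (by simpa [ha] using hb) ha

theorem IsSemilinear.eq_matrixSemilinear (hg : IsSemilinear σ g) :
    ⇑g.toAdd = matrixSemilinear (g.toAdd (1, 0)).1 (g.toAdd (0, 1)).1 (g.toAdd (1, 0)).2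
      (g.toAdd (0, 1)).2 σ := by
  ext1 v
  have v_eq : v = v.1 • (1, 0) + v.2 • (0, 1) := by simp
  conv_lhs => rw [v_eq, map_add, hg, hg]
  ext <;> simp [matrixSemilinear, mul_comm]

theorem injective_matrixSemilinear (h : a * d - b * c ≠ 0) :
    Function.Injective (matrixSemilinear a b c d σ) := fun u v huv => by
  obtain ⟨h₁, h₂⟩ := Prod.ext_iff.1 huv
  simp only [matrixSemilinear] at h₁ h₂
  have fst_eq : σ u.1 = σ v.1 := mul_left_cancel₀ h (by linear_combination d * h₁ - b * h₂)
  have snd_eq : σ u.2 = σ v.2 := mul_left_cancel₀ h (by linear_combination a * h₂ - c * h₁)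
  exact Prod.ext (σ.injective fst_eq) (σ.injective snd_eq)

theorem mem_semilinearStab {U : Set (K × K)} : g ∈ semilinearStab K U ↔
    (∃ σ : K ≃+* K, IsSemilinear σ g) ∧ g.toAdd '' U = U :=
  and_congr_right fun _ => by
    rw [← Set.eq_preimage_iff_image_eq g.toAdd.bijective]
    exact Set.ext_iff.symm

/-- The units of `K` fixed by the automorphism `T`. -/
def fixedUnits (T : K ≃+* K) : Subgroup Kˣ :=
  (Units.map (T : K →* K)).eqLocus (MonoidHom.id Kˣ)

theorem mem_fixedUnits {T : K ≃+* K} {a : Kˣ} : a ∈ fixedUnits T ↔ T a = a := Units.ext_iff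

end Plane

theorem image_eq_self_iff_mapsTo {α : Type*} {f : α → α} {s : Set α} (hs : s.Finite)
    (hf : s.InjOn f) : f '' s = s ↔ s.MapsTo f s :=
  ⟨fun h => Set.mapsTo_iff_image_subset.2 h.le, fun h =>
    ((hs.injOn_iff_bijOn_of_mapsTo h).1 hf).image_eq⟩

theorem image_matrixSemilinear_graph_eq_iff {K : Type*} [Field K] [Finite K] [CharP K 2]
    {T σ : K ≃+* K} {w a b c d : K} (hT : orderOf T = 5) (hw : T w = w) (hw2 : w ^ 2 = w + 1)
    (hσ : Commute σ T) (hinj : Function.Injective (matrixSemilinear a b c d σ)) :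
    matrixSemilinear a b c d σ '' (palindromicMap T w).graph = (palindromicMap T w).graph ↔
      c = 0 ∧ d = a ∧ a ≠ 0 ∧ T a = a ∧ b ∈ (quadraticMap T (w + 1)).ker ∧ σ w = w := by
  have σ_w : σ w = w ∨ σ w = w + 1 := by
    have σ_w_sq : σ w ^ 2 = σ w + 1 := by rw [← map_pow, hw2, map_add, map_one]
    grind
  have hac : (a, c) ≠ 0 := fun h => by
    obtain ⟨rfl, rfl⟩ := Prod.ext_iff.1 h
    simpa [matrixSemilinear] using @hinj (1, 0) 0
  rw [image_eq_self_iff_mapsTo (Set.toFinite _) hinj.injOn,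
    ← forall_palindromicMap_eq_iff hT hw hw2 σ_w hac, σ.surjective.forall]
  simp [Set.MapsTo, matrixSemilinear, map_palindromicMap hσ]

theorem linearAddAut_inf_semilinearStab_graph {K : Type*} [Field K] [Finite K] [CharP K 2]
    {T : K ≃+* K} {w : K} (hT : orderOf T = 5) (hw : T w = w) (hw2 : w ^ 2 = w + 1) :
    linearAddAut K (K × K) ⊓ semilinearStab K (palindromicMap T w).graph =
      ((quadraticMap T (w + 1)).ker.toSubgroup.prod (fixedUnits T)).map scaledShear := by
  ext g
  rw [mem_inf, mem_linearAddAut, mem_semilinearStab]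
  constructor
  · rintro ⟨linear, -, image⟩
    have g_eq := linear.eq_matrixSemilinear
    generalize (g.toAdd (1, 0)).1 = a, (g.toAdd (0, 1)).1 = b, (g.toAdd (1, 0)).2 = c,
      (g.toAdd (0, 1)).2 = d at g_eq
    rw [g_eq, image_matrixSemilinear_graph_eq_iff hT hw hw2 (Commute.one_left T)
      (g_eq ▸ g.toAdd.injective)] at image
    obtain ⟨rfl, rfl, d_ne, T_d, hb, -⟩ := image
    have shear_mem : d⁻¹ * b ∈ (quadraticMap T (w + 1)).ker :=
      mul_mem_ker_quadraticMap (by rw [map_inv₀, T_d]) hb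
    refine ⟨(.ofAdd (d⁻¹ * b), Units.mk0 d d_ne), ⟨shear_mem, mem_fixedUnits.2 T_d⟩, ?_⟩
    refine Multiplicative.toAdd.injective (DFunLike.coe_injective ?_)
    rw [g_eq, scaledShear_toAdd]
    simp [d_ne]
  · rintro ⟨m, ⟨hb, ha⟩, rfl⟩
    have linear := isSemilinear_scaledShear m
    refine ⟨linear, ⟨_, linear⟩, ?_⟩
    rw [scaledShear_toAdd, image_matrixSemilinear_graph_eq_iff hT hw hw2 (Commute.one_left T)
      (scaledShear_toAdd m ▸ (scaledShear m).toAdd.injective)]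
    have T_a := mem_fixedUnits.1 ha
    exact ⟨rfl, rfl, m.2.ne_zero, T_a, mul_mem_ker_quadraticMap T_a hb, rfl⟩

/-! ### The stabilizer over a finite field -/

section Stabilizer

variable {K : Type*} [Field K] [Finite K] {q n : ℕ} {T : K ≃+* K}

theorem natCard_fixedUnits (hK : Nat.card K = q ^ n) (hT : ∀ x, T x = x ^ q) :
    Nat.card (fixedUnits T) = q - 1 := by
  have hq : q - 1 + 1 = q := Nat.sub_add_cancel (one_lt_of_natCard_eq_pow hK).le
  have fixedUnits_eq : fixedUnits T = (powMonoidHom (q - 1) : Kˣ →* Kˣ).ker := by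
    ext a
    rw [mem_fixedUnits, hT, MonoidHom.mem_ker, powMonoidHom_apply, ← Units.val_pow_eq_pow_val,
      Units.val_inj, ← hq, pow_succ, mul_eq_right, Nat.add_sub_cancel]
  have dvd : q - 1 ∣ q ^ n - 1 := by simpa only [one_pow] using Nat.sub_dvd_pow_sub_pow q 1 n
  rw [fixedUnits_eq, IsCyclic.card_powMonoidHom_ker, Nat.card_units, hK,
    Nat.gcd_eq_right dvd]

variable [CharP K 2] {u w : K}

theorem natCard_ker_quadraticMap (hK : Nat.card K = q ^ 5) (hT : ∀ x, T x = x ^ q) (hu : T u = u)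
    (hu2 : u ^ 2 = u + 1) : Nat.card (quadraticMap T u).ker = q ^ 2 := by
  have hq := one_lt_of_natCard_eq_pow hK
  have hT5 : T ^ 5 = 1 := orderOf_of_forall_apply_eq_pow hK hT ▸ pow_orderOf_eq_one T
  refine natCard_ker_eq_of_comp_eq_zero (quadraticMap_comp_cubicMap hT5 hu hu2) (n := q ^ 3) ?_ ?_
    (by rw [hK, ← pow_add])
  · refine le_trans (Set.ncard_le_ncard fun x hx => ?_)
      (ncard_zeros_linearized_le hq ![1, u, 1] one_ne_zero)
    simp only [SetLike.mem_coe, AddMonoidHom.mem_ker, quadraticMap_apply, hT] at hx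
    suffices x + u * x ^ q + x ^ q ^ 2 = 0 by simpa [Fin.sum_univ_three] using this
    linear_combination hx
  · refine le_trans (Set.ncard_le_ncard fun x hx => ?_)
      (ncard_zeros_linearized_le hq ![1, u, u, 1] one_ne_zero)
    simp only [SetLike.mem_coe, AddMonoidHom.mem_ker, cubicMap_apply, hT] at hx
    suffices x + u * x ^ q + u * x ^ q ^ 2 + x ^ q ^ 3 = 0 by simpa [Fin.sum_univ_four] using this
    linear_combination hx

theorem map_eq_self_iff_exists_pow (hw2 : w ^ 2 = w + 1) (σ : K ≃+* K) :
    σ w = w ↔ ∃ j : ℕ, ∀ x, σ x = x ^ 4 ^ j := by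
  have pow_w (j : ℕ) : w ^ 4 ^ j = w := by
    have w_four : w ^ 4 = w := calc
      w ^ 4 = (w ^ 2) ^ 2 := pow_mul w 2 2
      _ = w + 1 + 1 := by rw [hw2, CharTwo.add_sq, hw2, one_pow]
      _ = w := CharTwo.add_cancel_right w 1
    induction j with
    | zero => simp
    | succ j ih => rw [pow_succ, pow_mul, ih, w_four]
  constructor
  · intro σ_w
    obtain ⟨n, hn⟩ := exists_forall_apply_eq_pow 2 σ
    obtain ⟨j, rfl | rfl⟩ := n.even_or_odd'
    · exact ⟨j, fun x => by rw [hn, pow_mul, show 2 ^ 2 = 4 from rfl]⟩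
    · rw [hn, pow_succ, pow_mul 2, pow_mul, show 2 ^ 2 = 4 from rfl, pow_w, hw2, add_eq_left] at σ_w
      exact absurd σ_w one_ne_zero
  · rintro ⟨j, hj⟩
    rw [hj, pow_w]

theorem nonempty_linearAddAut_subgroupOf_semilinearStab_mulEquiv {m : ℕ}
    (hK : Nat.card K = q ^ 5) (hm : q ^ 2 = 2 ^ m) (hT : ∀ x, T x = x ^ q) (hw : T w = w)
    (hw2 : w ^ 2 = w + 1) :
    Nonempty ((linearAddAut K (K × K)).subgroupOf (semilinearStab K (palindromicMap T w).graph) ≃*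
      Multiplicative (Fin m → ZMod 2) × Multiplicative (ZMod (q - 1))) := by
  have T_order := orderOf_of_forall_apply_eq_pow hK hT
  have u_sq : (w + 1) ^ 2 = w + 1 + 1 := by rw [CharTwo.add_sq, hw2, one_pow]
  obtain ⟨eE⟩ : Nonempty ((quadraticMap T (w + 1)).ker ≃+ (Fin m → ZMod 2)) :=
    nonempty_addEquiv_pi_zmod (fun x => Subtype.ext (CharTwo.two_nsmul x.1))
      ((natCard_ker_quadraticMap hK hT (by rw [map_add, hw, map_one]) u_sq).trans hm)
  have eU : Multiplicative (ZMod (q - 1)) ≃* fixedUnits T :=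
    natCard_fixedUnits hK hT ▸ zmodCyclicMulEquiv inferInstance
  exact ⟨(MulEquiv.subgroupCongr (inf_subgroupOf_right _ _).symm).trans <|
    (subgroupOfEquivOfLe inf_le_right).trans <|
    (MulEquiv.subgroupCongr (linearAddAut_inf_semilinearStab_graph T_order hw hw2)).trans <|
    (equivMapOfInjective _ _ injective_scaledShear).symm.trans <|
    (Subgroup.prodEquiv _ _).trans (eE.toMultiplicative.prodCongr eU.symm)⟩

theorem exists_semilinearStab_graph_mulEquiv {k m : ℕ} (hK : Nat.card K = q ^ 5)
    (hK4 : Nat.card K = 4 ^ k) (hm : q ^ 2 = 2 ^ m) (hT : ∀ x, T x = x ^ q) (hw : T w = w)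
    (hw2 : w ^ 2 = w + 1) :
    ∃ φ : Multiplicative (ZMod k) →*
        MulAut (Multiplicative (Fin m → ZMod 2) × Multiplicative (ZMod (q - 1))),
      Nonempty (semilinearStab K (palindromicMap T w).graph ≃*
        (Multiplicative (Fin m → ZMod 2) × Multiplicative (ZMod (q - 1))) ⋊[φ]
          Multiplicative (ZMod k)) := by
  set F := iterateFrobeniusEquiv K 2 2
  have F_apply (x : K) : F x = x ^ 4 := iterateFrobeniusEquiv_def K 2 2 x
  have F_order := orderOf_of_forall_apply_eq_pow hK4 F_apply
  have T_order := orderOf_of_forall_apply_eq_pow hK hT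
  have F_mem : coordAut F ∈ semilinearStab K (palindromicMap T w).graph := by
    have F_w : F w = w := (map_eq_self_iff_exists_pow hw2 F).2 ⟨1, by simpa using F_apply⟩
    refine mem_semilinearStab.2 ⟨⟨F, isSemilinear_coordAut F⟩, ?_⟩
    rw [coordAut_toAdd, image_matrixSemilinear_graph_eq_iff T_order hw hw2
      (commute_of_forall_apply_eq_pow hT F) (injective_matrixSemilinear (by simp))]
    exact ⟨rfl, rfl, one_ne_zero, map_one T, zero_mem _, F_w⟩
  refine (nonempty_linearAddAut_subgroupOf_semilinearStab_mulEquiv hK hm hT hw hw2).elim <|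
    exists_mulEquiv_semidirectProduct_of_isSemilinear (f := ⟨coordAut F, F_mem⟩)
      (isSemilinear_coordAut F) ?_ F_order fun g hg => ?_
  · rw [orderOf_mk, orderOf_injective _ injective_coordAut, F_order]
  · obtain ⟨⟨σ, hσ⟩, image⟩ := mem_semilinearStab.1 hg
    rw [hσ.eq_matrixSemilinear, image_matrixSemilinear_graph_eq_iff T_order hw hw2
      (commute_of_forall_apply_eq_pow hT σ) (hσ.eq_matrixSemilinear ▸ g.toAdd.injective)] at image
    obtain ⟨j, hj⟩ := (map_eq_self_iff_exists_pow hw2 σ).1 image.2.2.2.2.2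
    have F_pow : F ^ j = σ := RingEquiv.ext fun x => by
      rw [pow_apply_of_forall_apply_eq_pow F_apply, hj]
    exact ⟨σ, ⟨j, by simpa using F_pow⟩, hσ⟩

end Stabilizer

/-- description of the stabilizer of `U_{f_w}` in `ΓL(2, q^5)` for
`q = 2^{2s}`, `w² = w + 1`, `f_w(x) = x^{q^4} + w x^{q^3} + w x^q + x`.  A semilinear
map `(x, y) ↦ A·(σ x, σ y)` with `A = ((a,b),(c,d))` invertible maps `U_{f_w}` onto
itself iff `c = 0`, `d = a ∈ F_q^*`, `b^{q²} + (w+1) b^q + b = 0` and `σ` is an even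
power of the Frobenius (`σ x = x^{4^j}`).  In particular the stabilizer of `U_{f_w}` in
`ΓL(2,q^5)` is isomorphic to `(E_{q²} × C_{q−1}) ⋊ C_{5s}` for a suitable action, where
`E_{q²}` is elementary abelian of order `q² = 2^{4s}`. -/
theorem stmt_11 (s : ℕ) (hs : 1 ≤ s) (q : ℕ) (hq : q = 2 ^ (2 * s))
    (K : Type) [Field K] [Fintype K] (hK : Fintype.card K = q ^ 5)
    (w : K) (hw : w ^ q = w) (hw2 : w ^ 2 = w + 1)
    (fw : K → K) (hfw : fw = fun x => x ^ q ^ 4 + w * x ^ q ^ 3 + w * x ^ q + x)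
    (U : Set (K × K)) (hU : U = {u : K × K | ∃ x : K, u = (x, fw x)}) :
    (∀ (a b c d : K) (σ : K ≃+* K), a * d - b * c ≠ 0 →
      ((fun v : K × K => (a * σ v.1 + b * σ v.2, c * σ v.1 + d * σ v.2)) '' U = U ↔
        (c = 0 ∧ d = a ∧ a ≠ 0 ∧ a ^ q = a ∧
          b ^ q ^ 2 + (w + 1) * b ^ q + b = 0 ∧ ∃ j : ℕ, ∀ x : K, σ x = x ^ 4 ^ j))) ∧
    ∃ φ : Multiplicative (ZMod (5 * s)) →*
        MulAut (Multiplicative (Fin (4 * s) → ZMod 2) × Multiplicative (ZMod (q - 1))),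
      Nonempty ((semilinearStab K U) ≃*
        SemidirectProduct
          (Multiplicative (Fin (4 * s) → ZMod 2) × Multiplicative (ZMod (q - 1)))
          (Multiplicative (ZMod (5 * s))) φ) := by
  have hK2 : Fintype.card K = 2 ^ (2 * s * 5) := by rw [hK, hq, ← pow_mul]
  have : CharP K 2 := charP_of_card_eq_prime_pow hK2
  rw [← Nat.card_eq_fintype_card] at hK hK2
  let T : K ≃+* K := iterateFrobeniusEquiv K 2 (2 * s)
  have hT (x : K) : T x = x ^ q := by rw [iterateFrobeniusEquiv_def, hq]
  have T_order := orderOf_of_forall_apply_eq_pow hK hT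
  have T_w : T w = w := (hT w).trans hw
  have fw_eq : fw = palindromicMap T w := by
    ext x
    simp only [hfw, palindromicMap_apply, hT]
    ring
  have U_eq : U = (palindromicMap T w).graph := by
    ext ⟨x, y⟩
    simp [hU, fw_eq, eq_comm]
  rw [U_eq]
  refine ⟨fun a b c d σ hdet => ?_, ?_⟩
  · rw [← map_eq_self_iff_exists_pow hw2, ← hT, sq, pow_mul, ← hT, ← hT]
    exact image_matrixSemilinear_graph_eq_iff T_order T_w hw2
      (commute_of_forall_apply_eq_pow hT σ) (injective_matrixSemilinear hdet)
  · refine exists_semilinearStab_graph_mulEquiv hK ?_ ?_ hT T_w hw2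
    · rw [hK2, show 4 = 2 ^ 2 from rfl, ← pow_mul]; ring_nf
    · rw [hq, ← pow_mul]; ring_nf
end

section
/- Let q be a prime power, n ≥ 3 odd, s a positive integer with gcd(s, n) = 1, and δ ∈ F_{q^n}^* with N_{q^n/q}(δ) = 1, where N_{q^n/q} is the norm from F_{q^n} to F_q. Let f(x) = x + δ x^{q^{2s}} ∈ F_{q^n}[x]. Then the number of elements m ∈ F_{q^n} with dim_{F_q} ker(f(x) − m·x^{q^s}) > 1 equals (q^{n−1} − 1)/(q² − 1); that is, f is an (q^{n−1} − 1)/(q² − 1)-fat polynomial of index s. -/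
/-!
Write `σ` for `x ↦ x ^ q ^ s`, which generates `Gal(K/F)`, and `D = σ - id`. By Hilbert's theorem
90, `δ = η / σ η` for some `η ≠ 0`. If `y ≠ 0` lies in `V = ker (f - m σ)`, then `y * t ∈ V` exactly
when `D t` lies on the line `F ∙ η / (y * σ y)`. Since `ker D = F`, the weight of `m` is then `2`
or `1` according to whether `η / (y * σ y)` lies in the hyperplane `range D` or not.

Hence the nonzero elements of the kernels of dimension greater than `1` are the `y` with
`η / (y * σ y) ∈ range D`. As `n` is odd, `σ ^ 2` still generates the Galois group, so
`y ↦ y * σ y` induces a bijection of `Kˣ / Fˣ`. There are therefore as many such `y` as nonzero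
elements of `range D`, namely `q ^ (n - 1) - 1`, and each `m` of weight `2` accounts for
`q ^ 2 - 1` of them.
-/

open Module

section Counting

theorem log_natCard_eq_finrank (F V : Type*) [Field F] [Finite F] [AddCommGroup V] [Module F V]
    [Module.Finite F V] : Nat.log (Nat.card F) (Nat.card V) = finrank F V := by
  rw [natCard_eq_pow_finrank (K := F) (V := V), Nat.log_pow Finite.one_lt_card]

theorem natCard_units_mem_submodule {F K : Type*} [Semiring F] [DivisionRing K] [Module F K]
    (V : Submodule F K) : Nat.card {u : Kˣ // (u : K) ∈ V} = Nat.card V - 1 := by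
  have himage : Units.val '' {u : Kˣ | (u : K) ∈ V} = (V : Set K) \ {0} := by
    ext x
    constructor
    · rintro ⟨u, hu, rfl⟩
      exact ⟨hu, u.ne_zero⟩
    · rintro ⟨hx, hx0⟩
      exact ⟨Units.mk0 x hx0, hx, rfl⟩
  calc Nat.card {u : Kˣ // (u : K) ∈ V}
      = Nat.card (Units.val '' {u : Kˣ | (u : K) ∈ V}) :=
        (Nat.card_image_of_injective Units.val_injective _).symm
    _ = ((V : Set K) \ {0}).ncard := by rw [himage]; rfl
    _ = Nat.card V - 1 := Set.ncard_sdiff_singleton_of_mem V.zero_mem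

theorem natCard_subtype_comp_eq_mul {α β : Type*} [Finite α] [Finite β] {f : α → β}
    {p : β → Prop} {k : ℕ} (hk : ∀ b, p b → Nat.card {a // f a = b} = k) :
    Nat.card {a // p (f a)} = Nat.card {b // p b} * k := by
  have := Fintype.ofFinite {b // p b}
  calc Nat.card {a // p (f a)}
      = Nat.card (Σ b : {b // p b}, {a // f a = b}) :=
        (Nat.card_congr (Equiv.sigmaSubtypeFiberEquivSubtype f fun _ => Iff.rfl)).symm
    _ = ∑ b : {b // p b}, Nat.card {a // f a = b} := Nat.card_sigma
    _ = Nat.card {b // p b} * k := by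
      simp only [fun b : {b // p b} => hk b b.2, Finset.sum_const, smul_eq_mul,
        Finset.card_univ, Nat.card_eq_fintype_card]

theorem natCard_preimage_eq_of_comap_eq {G : Type*} [Group G] {N : Subgroup G} [N.Normal]
    [Finite (G ⧸ N)] {φ : G →* G} (hφ : N.comap φ = N) {S : Set G}
    (hS : ∀ g ∈ S, ∀ h ∈ N, g * h ∈ S) : Nat.card (φ ⁻¹' S) = Nat.card S := by
  let φN : G ⧸ N →* G ⧸ N := QuotientGroup.map N N φ hφ.ge
  have hinj : Function.Injective φN := by
    rw [← MonoidHom.ker_eq_bot_iff, QuotientGroup.ker_map, hφ, QuotientGroup.map_mk'_self]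
  have hsurj : Function.Surjective φN := Finite.surjective_of_injective hinj
  let T : Set (G ⧸ N) := QuotientGroup.mk '' S
  have hST : QuotientGroup.mk ⁻¹' T = S := by
    refine Set.Subset.antisymm ?_ (Set.subset_preimage_image _ _)
    rintro g ⟨g', hg', hgg'⟩
    simpa using hS g' hg' _ (QuotientGroup.eq.1 hgg')
  have hcard (U : Set (G ⧸ N)) :
      Nat.card (QuotientGroup.mk (s := N) ⁻¹' U) = Nat.card N * Nat.card U := by
    rw [Nat.card_congr (QuotientGroup.preimageMkEquivSubgroupProdSet N U), Nat.card_prod]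
  calc Nat.card (φ ⁻¹' S)
      = Nat.card (QuotientGroup.mk (s := N) ⁻¹' (φN ⁻¹' T)) := by rw [← hST]; rfl
    _ = Nat.card N * Nat.card T := by
      rw [hcard, Nat.card_preimage_of_injective hinj (by simp [hsurj.range_eq])]
    _ = Nat.card S := by rw [← hcard, hST]

end Counting

theorem finrank_comap_eq_finrank_ker_add {F V W : Type*} [DivisionRing F] [AddCommGroup V]
    [AddCommGroup W] [Module F V] [Module F W] [FiniteDimensional F V] (f : V →ₗ[F] W)
    (p : Submodule F W) :
    finrank F (p.comap f) = finrank F (LinearMap.ker f) + finrank F ↥(LinearMap.range f ⊓ p) := by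
  have hker : LinearMap.ker (f.domRestrict (p.comap f)) =
      (LinearMap.ker f).comap (p.comap f).subtype := rfl
  have hle : LinearMap.ker f ≤ p.comap f := LinearMap.ker_le_comap f
  rw [← LinearMap.finrank_range_add_finrank_ker (f.domRestrict (p.comap f)), hker,
    (Submodule.comapSubtypeEquivOfLe hle).finrank_eq, LinearMap.range_domRestrict,
    Submodule.map_comap_eq, add_comm]

theorem finrank_inf_span_singleton {F V : Type*} [DivisionRing F] [AddCommGroup V] [Module F V]
    (p : Submodule F V) {v : V} [Decidable (v ∈ p)] (hv : v ≠ 0) :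
    finrank F ↥(p ⊓ F ∙ v) = if v ∈ p then 1 else 0 := by
  split_ifs with hvp
  · rw [inf_eq_right.2 ((Submodule.span_singleton_le_iff_mem v p).2 hvp), finrank_span_singleton hv]
  · rw [(Submodule.disjoint_span_singleton' hv).2 hvp |>.eq_bot, finrank_bot]

section LPKernel

variable {F K : Type*} [Field F] [Field K] [Algebra F K] {σ : K ≃ₐ[F] K} {δ η m y : K}

variable (σ) in
/-- The additive Hilbert 90 operator `x ↦ σ x - x`. -/
def differenceMap : K →ₗ[F] K :=
  σ.toLinearMap - LinearMap.id

@[simp]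
theorem differenceMap_apply (x : K) : differenceMap σ x = σ x - x :=
  rfl

theorem finrank_ker_differenceMap (hσ : ∀ x, σ x = x → x ∈ Set.range (algebraMap F K)) :
    finrank F (LinearMap.ker (differenceMap σ)) = 1 := by
  have hker : LinearMap.ker (differenceMap σ) = F ∙ (1 : K) := by
    ext x
    rw [LinearMap.mem_ker, differenceMap_apply, sub_eq_zero, Submodule.mem_span_singleton]
    constructor
    · intro hx
      obtain ⟨c, rfl⟩ := hσ x hx
      exact ⟨c, (Algebra.algebraMap_eq_smul_one c).symm⟩
    · rintro ⟨c, rfl⟩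
      rw [map_smul, map_one]
  rw [hker, finrank_span_singleton one_ne_zero]

variable (σ δ m) in
/-- The kernel of `f(x) - m x ^ q ^ s` for the Lunardon–Polverino type polynomial
`f(x) = x + δ x ^ q ^ (2 * s)`, with an arbitrary automorphism `σ` in the role of `x ↦ x ^ q ^ s`.
Its dimension is the weight of `m`. -/
def lpKernel : Submodule F K :=
  LinearMap.ker (LinearMap.id + δ • (σ.toLinearMap ∘ₗ σ.toLinearMap) - m • σ.toLinearMap)

theorem mem_lpKernel {x : K} : x ∈ lpKernel σ δ m ↔ x + δ * σ (σ x) = m * σ x := by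
  simp [lpKernel, sub_eq_zero]

variable (hσ : ∀ x, σ x = x → x ∈ Set.range (algebraMap F K)) (hη : η ≠ 0) (hδ : δ * σ η = η)

include hσ hη hδ

theorem mul_map_eq_self_iff_mem_span_singleton {c : K} : δ * σ c = c ↔ c ∈ F ∙ η := by
  have hση : σ η ≠ 0 := (map_ne_zero σ).2 hη
  rw [Submodule.mem_span_singleton]
  constructor
  · intro hc
    obtain ⟨a, ha⟩ := hσ (c / η) (by
      rw [map_div₀, div_eq_div_iff hση hη]
      linear_combination σ η * hc - σ c * hδ)
    exact ⟨a, by rw [Algebra.smul_def, ha, div_mul_cancel₀ _ hη]⟩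
  · rintro ⟨a, rfl⟩
    rw [map_smul, mul_smul_comm, hδ]

-- Both sides say that `c = y * σ y * (σ t - t)` satisfies `δ * σ c = c`.
theorem mul_mem_lpKernel_iff (hy : y ∈ lpKernel σ δ m) (hy0 : y ≠ 0) (t : K) :
    y * t ∈ lpKernel σ δ m ↔ differenceMap σ t ∈ F ∙ (η / (y * σ y)) := by
  have hσy : σ y ≠ 0 := (map_ne_zero σ).2 hy0
  have hscale : differenceMap σ t ∈ F ∙ (η / (y * σ y)) ↔ y * σ y * (σ t - t) ∈ F ∙ η := by
    simp only [Submodule.mem_span_singleton, differenceMap_apply, ← smul_div_assoc]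
    refine exists_congr fun a => ?_
    rw [div_eq_iff (mul_ne_zero hy0 hσy), mul_comm (σ t - t)]
  rw [mem_lpKernel] at hy
  rw [hscale, ← mul_map_eq_self_iff_mem_span_singleton hσ hη hδ, mem_lpKernel]
  simp only [map_mul, map_sub]
  constructor
  · intro h
    linear_combination σ y * h - σ y * σ t * hy
  · intro h
    apply mul_left_cancel₀ hσy
    linear_combination h + σ y * σ t * hy

theorem finrank_lpKernel [FiniteDimensional F K] (hy : y ∈ lpKernel σ δ m) (hy0 : y ≠ 0)
    [Decidable (η / (y * σ y) ∈ LinearMap.range (differenceMap σ))] :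
    finrank F (lpKernel σ δ m) =
      if η / (y * σ y) ∈ LinearMap.range (differenceMap σ) then 2 else 1 := by
  have hline : η / (y * σ y) ≠ 0 := div_ne_zero hη (mul_ne_zero hy0 ((map_ne_zero σ).2 hy0))
  let e : K ≃ₗ[F] K := (LinearEquiv.smulOfNeZero K K y hy0).restrictScalars F
  have hcomap : (lpKernel σ δ m).comap (e : K →ₗ[F] K) =
      (F ∙ (η / (y * σ y))).comap (differenceMap σ) :=
    Submodule.ext (mul_mem_lpKernel_iff hσ hη hδ hy hy0)
  rw [← (e.ofSubmodule' (lpKernel σ δ m)).finrank_eq, hcomap, finrank_comap_eq_finrank_ker_add,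
    finrank_ker_differenceMap hσ, finrank_inf_span_singleton _ hline]
  split_ifs <;> rfl

theorem one_lt_finrank_lpKernel_iff [FiniteDimensional F K] (hy : y ∈ lpKernel σ δ m)
    (hy0 : y ≠ 0) :
    1 < finrank F (lpKernel σ δ m) ↔ η / (y * σ y) ∈ LinearMap.range (differenceMap σ) := by
  classical
  rw [finrank_lpKernel hσ hη hδ hy hy0]
  split_ifs with h <;> simp [h]

theorem finrank_lpKernel_eq_two [FiniteDimensional F K] (hm : 1 < finrank F (lpKernel σ δ m)) :
    finrank F (lpKernel σ δ m) = 2 := by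
  classical
  have : Nontrivial (lpKernel σ δ m) := nontrivial_of_finrank_pos (zero_lt_one.trans hm)
  obtain ⟨⟨y, hy⟩, hy0⟩ := exists_ne (0 : lpKernel σ δ m)
  have hy0 : y ≠ 0 := fun h => hy0 (Subtype.ext h)
  have hrange := (one_lt_finrank_lpKernel_iff hσ hη hδ hy hy0).1 hm
  rw [finrank_lpKernel hσ hη hδ hy hy0, if_pos hrange]

end LPKernel

section UnitCount

theorem mem_range_unitsMap {F K : Type*} [DivisionRing F] [Semiring K] [Nontrivial K]
    {f : F →+* K} {u : Kˣ} :
    u ∈ (Units.map (f : F →* K)).range ↔ (u : K) ∈ Set.range f := by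
  constructor
  · rintro ⟨c, rfl⟩
    exact ⟨c, rfl⟩
  · rintro ⟨c, hc⟩
    have hc0 : c ≠ 0 := by
      rintro rfl
      exact u.ne_zero (hc.symm.trans (map_zero f))
    exact ⟨Units.mk0 c hc0, Units.ext hc⟩

variable {F K : Type*} [Field F] [Field K] [Algebra F K] {σ : K ≃ₐ[F] K} {η : K}

variable (σ) in
/-- The endomorphism `u ↦ u * σ u` of `Kˣ`. -/
def mulSelfMap : Kˣ →* Kˣ :=
  MonoidHom.id Kˣ * Units.map (σ : K →* K)

@[simp]
theorem coe_mulSelfMap (u : Kˣ) : (mulSelfMap σ u : K) = u * σ u :=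
  rfl

theorem mul_map_mem_range_algebraMap_iff
    (hσ : ∀ x, σ (σ x) = x → x ∈ Set.range (algebraMap F K)) {x : K} (hx : x ≠ 0) :
    x * σ x ∈ Set.range (algebraMap F K) ↔ x ∈ Set.range (algebraMap F K) := by
  constructor
  · rintro ⟨c, hc⟩
    have hfix : σ x * σ (σ x) = x * σ x := by rw [← map_mul, ← hc, AlgEquiv.commutes]
    exact hσ x (mul_left_cancel₀ ((map_ne_zero σ).2 hx) (hfix.trans (mul_comm _ _)))
  · rintro ⟨c, rfl⟩
    exact ⟨c * c, by rw [AlgEquiv.commutes, map_mul]⟩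

theorem natCard_div_mul_map_mem [Finite K]
    (hσ : ∀ x, σ (σ x) = x → x ∈ Set.range (algebraMap F K)) (hη : η ≠ 0) (L : Submodule F K) :
    Nat.card {y : Kˣ // η / (y * σ y) ∈ L} = Nat.card L - 1 := by
  have hcomap : (Units.map (algebraMap F K : F →* K)).range.comap (mulSelfMap σ) =
      (Units.map (algebraMap F K : F →* K)).range := by
    ext u
    rw [Subgroup.mem_comap, mem_range_unitsMap, mem_range_unitsMap,
      coe_mulSelfMap, mul_map_mem_range_algebraMap_iff hσ u.ne_zero]
  have hinv : ∀ u ∈ {u : Kˣ | η / u ∈ L}, ∀ c ∈ (Units.map (algebraMap F K : F →* K)).range,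
      u * c ∈ {u : Kˣ | η / u ∈ L} := by
    rintro u hu _ ⟨c, rfl⟩
    have hsmul : η / (u * algebraMap F K c) = (c : F)⁻¹ • (η / u) := by
      rw [Algebra.smul_def, map_inv₀, div_mul_eq_div_div, div_eq_inv_mul _ (algebraMap F K c)]
    simpa [hsmul] using L.smul_mem (c : F)⁻¹ hu
  calc Nat.card {y : Kˣ // η / (y * σ y) ∈ L}
      = Nat.card {u : Kˣ // η / u ∈ L} := natCard_preimage_eq_of_comap_eq hcomap hinv
    _ = Nat.card {w : Kˣ // (w : K) ∈ L} :=
      Nat.card_congr ((Equiv.divLeft (Units.mk0 η hη)).subtypeEquiv fun u => by simp)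
    _ = Nat.card L - 1 := natCard_units_mem_submodule L

end UnitCount

section FatCount

variable {F K : Type*} [Field F] [Field K] [Algebra F K] {σ : K ≃ₐ[F] K} {δ η m y : K}

variable (σ δ) in
/-- The unique `m` with `y` in `lpKernel σ δ m`, for `y ≠ 0`. -/
def lpSlope (y : K) : K :=
  (y + δ * σ (σ y)) / σ y

theorem lpSlope_eq_iff (hy : y ≠ 0) : lpSlope σ δ y = m ↔ y ∈ lpKernel σ δ m := by
  rw [lpSlope, div_eq_iff ((map_ne_zero σ).2 hy), mem_lpKernel]

variable [Finite K]

theorem natCard_range_differenceMap (hσ : ∀ x, σ x = x → x ∈ Set.range (algebraMap F K)) :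
    Nat.card (LinearMap.range (differenceMap σ)) = Nat.card F ^ (finrank F K - 1) := by
  rw [natCard_eq_pow_finrank (K := F),
    ← LinearMap.finrank_range_add_finrank_ker (differenceMap σ), finrank_ker_differenceMap hσ,
    Nat.add_sub_cancel]

theorem natCard_one_lt_finrank_lpKernel_mul
    (hσ : ∀ x, σ (σ x) = x → x ∈ Set.range (algebraMap F K)) (hη : η ≠ 0) (hδ : δ * σ η = η) :
    Nat.card {m : K // 1 < finrank F (lpKernel σ δ m)} * (Nat.card F ^ 2 - 1) =
      Nat.card F ^ (finrank F K - 1) - 1 := by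
  have hσ₁ : ∀ x, σ x = x → x ∈ Set.range (algebraMap F K) :=
    fun x hx => hσ x (by rw [hx, hx])
  have hfiber : ∀ m : K, 1 < finrank F (lpKernel σ δ m) →
      Nat.card {y : Kˣ // lpSlope σ δ y = m} = Nat.card F ^ 2 - 1 := by
    intro m hm
    rw [Nat.card_congr (Equiv.subtypeEquivRight fun y : Kˣ => lpSlope_eq_iff y.ne_zero),
      natCard_units_mem_submodule, natCard_eq_pow_finrank (K := F),
      finrank_lpKernel_eq_two hσ₁ hη hδ hm]
  have hheavy (y : Kˣ) : 1 < finrank F (lpKernel σ δ (lpSlope σ δ y)) ↔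
      η / (y * σ y) ∈ LinearMap.range (differenceMap σ) :=
    one_lt_finrank_lpKernel_iff hσ₁ hη hδ ((lpSlope_eq_iff y.ne_zero).1 rfl) y.ne_zero
  calc Nat.card {m : K // 1 < finrank F (lpKernel σ δ m)} * (Nat.card F ^ 2 - 1)
      = Nat.card {y : Kˣ // 1 < finrank F (lpKernel σ δ (lpSlope σ δ y))} :=
        (natCard_subtype_comp_eq_mul hfiber).symm
    _ = Nat.card {y : Kˣ // η / (y * σ y) ∈ LinearMap.range (differenceMap σ)} := by
        simp only [hheavy]
    _ = Nat.card (LinearMap.range (differenceMap σ)) - 1 := natCard_div_mul_map_mem hσ hη _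
    _ = Nat.card F ^ (finrank F K - 1) - 1 := by rw [natCard_range_differenceMap hσ₁]

end FatCount

section Frobenius

open FiniteField

theorem frobeniusAlgEquivOfAlgebraic_pow_apply {F K : Type*} [Field F] [Fintype F] [Field K]
    [Algebra F K] [Algebra.IsAlgebraic F K] (k : ℕ) (x : K) :
    (frobeniusAlgEquivOfAlgebraic F K ^ k) x = x ^ Nat.card F ^ k := by
  rw [AlgEquiv.coe_pow, coe_frobeniusAlgEquivOfAlgebraic_iterate, Nat.card_eq_fintype_card]

theorem mem_zpowers_frobeniusAlgEquivOfAlgebraic_pow {F K : Type*} [Field F] [Fintype F] [Field K]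
    [Finite K] [Algebra F K] {k : ℕ} (hk : k.Coprime (finrank F K)) (g : K ≃ₐ[F] K) :
    g ∈ Subgroup.zpowers (frobeniusAlgEquivOfAlgebraic F K ^ k) := by
  obtain ⟨i, rfl⟩ := (bijective_frobeniusAlgEquivOfAlgebraic_pow F K).2 g
  refine Subgroup.pow_mem _ (mem_zpowers_pow_iff.2 ?_) _
  rwa [orderOf_frobeniusAlgEquivOfAlgebraic]

theorem mem_range_algebraMap_of_pow_eq_self {F K : Type*} [Field F] [Field K] [Finite K]
    [Algebra F K] {k : ℕ} (hk : k.Coprime (finrank F K)) {x : K}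
    (hx : x ^ Nat.card F ^ k = x) : x ∈ Set.range (algebraMap F K) := by
  have := Finite.of_injective _ (algebraMap F K).injective
  have := Fintype.ofFinite F
  have hle : Subgroup.zpowers (frobeniusAlgEquivOfAlgebraic F K ^ k) ≤
      MulAction.stabilizer (K ≃ₐ[F] K) x :=
    Subgroup.zpowers_le.2 ((frobeniusAlgEquivOfAlgebraic_pow_apply k x).trans hx)
  rw [IsGalois.mem_range_algebraMap_iff_fixed]
  exact fun g => hle (mem_zpowers_frobeniusAlgEquivOfAlgebraic_pow hk g)

-- `groupCohomology.exists_div_of_norm_eq_one` is only available for fields in `Type`.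
variable {F K : Type} [Field F] [Field K] [Finite K] [Algebra F K] {s : ℕ} {δ : K}

theorem exists_ne_zero_mul_pow_eq_self (hs : s.Coprime (finrank F K))
    (hδ : δ ^ (∑ i ∈ Finset.range (finrank F K), Nat.card F ^ i) = 1) :
    ∃ η : K, η ≠ 0 ∧ δ * η ^ Nat.card F ^ s = η := by
  have := Finite.of_injective _ (algebraMap F K).injective
  have := Fintype.ofFinite F
  have hnorm : Algebra.norm F δ = 1 := (algebraMap F K).injective <| by
    rw [algebraMap_norm_eq_prod_pow, Finset.prod_pow_eq_pow_sum, hδ, map_one]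
  obtain ⟨η, hη⟩ := groupCohomology.exists_div_of_norm_eq_one
    (mem_zpowers_frobeniusAlgEquivOfAlgebraic_pow hs) hnorm
  rw [frobeniusAlgEquivOfAlgebraic_pow_apply] at hη
  exact ⟨η, η.ne_zero, by rw [← hη, div_mul_cancel₀ _ (pow_ne_zero _ η.ne_zero)]⟩

theorem natCard_one_lt_log_natCard_binomial_mul (hs : s.Coprime (finrank F K))
    (hodd : Odd (finrank F K))
    (hδ : δ ^ (∑ i ∈ Finset.range (finrank F K), Nat.card F ^ i) = 1) :
    Nat.card {m : K // 1 < Nat.log (Nat.card F)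
        (Nat.card {x : K // x + δ * x ^ Nat.card F ^ (2 * s) = m * x ^ Nat.card F ^ s})} *
      (Nat.card F ^ 2 - 1) = Nat.card F ^ (finrank F K - 1) - 1 := by
  have := Finite.of_injective _ (algebraMap F K).injective
  have := Fintype.ofFinite F
  let σ : K ≃ₐ[F] K := frobeniusAlgEquivOfAlgebraic F K ^ s
  have hσ (x : K) : σ x = x ^ Nat.card F ^ s := frobeniusAlgEquivOfAlgebraic_pow_apply s x
  have hσσ (x : K) : σ (σ x) = x ^ Nat.card F ^ (2 * s) := by
    rw [hσ, hσ, ← pow_mul, ← pow_add, two_mul]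
  have hfixed (x : K) (hx : σ (σ x) = x) : x ∈ Set.range (algebraMap F K) :=
    mem_range_algebraMap_of_pow_eq_self ((Nat.coprime_two_left.2 hodd).mul_left hs)
      ((hσσ x).symm.trans hx)
  obtain ⟨η, hη, hδη⟩ := exists_ne_zero_mul_pow_eq_self hs hδ
  rw [← hσ] at hδη
  have hweight (m : K) : finrank F (lpKernel σ δ m) = Nat.log (Nat.card F)
      (Nat.card {x : K // x + δ * x ^ Nat.card F ^ (2 * s) = m * x ^ Nat.card F ^ s}) := by
    simp only [← log_natCard_eq_finrank, ← hσ, ← hσσ, ← mem_lpKernel]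
  simpa only [hweight] using natCard_one_lt_finrank_lpKernel_mul hfixed hη hδη

end Frobenius

theorem exists_algebra_natCard_eq_pow {p e n : ℕ} [Fact p.Prime] (he : e ≠ 0) (K : Type*)
    [Field K] [Finite K] (hK : Nat.card K = (p ^ e) ^ n) :
    ∃ (F : Type) (_ : Field F) (_ : Algebra F K), Nat.card F = p ^ e ∧ finrank F K = n := by
  have := Fintype.ofFinite K
  have hK' : Fintype.card K = p ^ (e * n) := by rw [← Nat.card_eq_fintype_card, hK, pow_mul]
  have : CharP K p := charP_of_card_eq_prime_pow hK'
  let _ : Algebra (ZMod p) K := ZMod.algebra K p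
  have hfinrank : finrank (ZMod p) K = e * n :=
    Nat.pow_right_injective (Fact.out : p.Prime).two_le
      ((FiniteField.pow_finrank_eq_card p K).trans hK')
  obtain ⟨ι⟩ := FiniteField.nonempty_algHom_of_finrank_dvd (F := ZMod p) (K := GaloisField p e)
    (L := K) (by rw [GaloisField.finrank p he, hfinrank]; exact dvd_mul_right e n)
  let _ : Algebra (GaloisField p e) K := ι.toRingHom.toAlgebra
  have hcard : Nat.card (GaloisField p e) = p ^ e := GaloisField.card p e he
  have hpow := natCard_eq_pow_finrank (K := GaloisField p e) (V := K)
  rw [hK, hcard] at hpow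
  exact ⟨GaloisField p e, inferInstance, inferInstance, hcard,
    (Nat.pow_right_injective (Nat.one_lt_pow he (Fact.out : p.Prime).one_lt) hpow).symm⟩

/-- Proposition `prop:nodd`: for `n ≥ 3` odd, `gcd(s,n) = 1` and
`δ ∈ F_{q^n}^*` with `N_{q^n/q}(δ) = δ^{1+q+⋯+q^{n-1}} = 1`, the LP-polynomial
`f(x) = x + δ x^{q^{2s}}` is `(q^{n-1}-1)/(q²-1)`-fat of index `s`: the number of
`m ∈ F_{q^n}` with `dim_{F_q} ker(f - m·x^{q^s}) > 1` (dimension encoded as `Nat.log q`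
of the kernel cardinality), multiplied by `q² - 1`, equals `q^{n-1} - 1`. -/
theorem stmt_12 (p e q n s : ℕ) (hp : p.Prime) (he : 1 ≤ e) (hq : q = p ^ e)
    (hn : 3 ≤ n) (hodd : Odd n) (hs : 1 ≤ s) (hgcd : Nat.gcd s n = 1)
    (K : Type) [Field K] [Fintype K] (hK : Fintype.card K = q ^ n)
    (δ : K) (hδ0 : δ ≠ 0) (hnorm : δ ^ (∑ i ∈ Finset.range n, q ^ i) = 1)
    (f : K → K) (hf : f = fun x => x + δ * x ^ q ^ (2 * s)) :
    Nat.card {m : K // 1 < Nat.log q (Nat.card {x : K // f x = m * x ^ q ^ s})} *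
        (q ^ 2 - 1) = q ^ (n - 1) - 1 := by
  have : Fact p.Prime := ⟨hp⟩
  subst hf hq
  obtain ⟨F, _, _, hF, rfl⟩ := exists_algebra_natCard_eq_pow (Nat.one_le_iff_ne_zero.1 he) K
    (Nat.card_eq_fintype_card.trans hK)
  simp only [← hF] at hnorm ⊢
  exact natCard_one_lt_log_natCard_binomial_mul hgcd hodd hnorm
end

section
/- Let q be a prime power and n, s positive integers with gcd(s, n) = 1. For z ∈ F_{q^n}, one has Σ_{i=0}^{n−1} z^{(q^{si} − 1)/(q^s − 1)} = 0 if and only if there exists y ∈ F_{q^n}^* such that z = y^{q^s − 1} and Tr_{q^n/q}(y) = 0. -/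
/-!
Let `L / K` be cyclic of degree `n` with Galois group generated by `σ`, and write
`Nᵢ = z · σ z ⋯ σⁱ⁻¹ z` and `S = N₀ + ⋯ + Nₙ₋₁`. Since `z · σ Nᵢ = Nᵢ₊₁`, we have
`z · σ S + 1 = S + Nₙ`, so `S = 0` forces the norm `Nₙ` of `z` to be `1`, and Hilbert's Theorem 90
gives `z = σ y / y`. For such a `z` the product `Nᵢ` telescopes to `σⁱ y / y`, so `y · S` is the
trace of `y`. The finite field statement is the case where `σ` is the `s`-th power of the Frobenius,
which generates the Galois group because `s` is coprime to `n`.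
-/

/-- The partial norm `x · f x ⋯ fⁱ⁻¹ x` of `x` along a self-map `f`. When `f` generates the Galois
group of a cyclic extension of degree `i`, it is the norm of `x`. -/
def partialNorm {M : Type*} [CommMonoid M] (f : M → M) (i : ℕ) (x : M) : M :=
  ∏ j ∈ Finset.range i, f^[j] x

theorem mul_map_partialNorm {M F : Type*} [CommMonoid M] [FunLike F M M] [MonoidHomClass F M M]
    (f : F) (i : ℕ) (x : M) : x * f (partialNorm f i x) = partialNorm f (i + 1) x := by
  simp only [partialNorm, map_prod, Finset.prod_range_succ', Function.iterate_succ_apply',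
    Function.iterate_zero, id_eq, mul_comm]

theorem mul_map_sum_partialNorm_add_one {R F : Type*} [CommSemiring R] [FunLike F R R]
    [RingHomClass F R R] (f : F) (n : ℕ) (x : R) :
    x * f (∑ i ∈ Finset.range n, partialNorm f i x) + 1 =
      ∑ i ∈ Finset.range n, partialNorm f i x + partialNorm f n x := by
  rw [← Finset.sum_range_succ, Finset.sum_range_succ', map_sum, Finset.mul_sum]
  simp only [mul_map_partialNorm]
  simp [partialNorm]

theorem partialNorm_eq_one_of_sum_eq_zero {R F : Type*} [CommSemiring R] [FunLike F R R]
    [RingHomClass F R R] {f : F} {n : ℕ} {x : R}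
    (h : ∑ i ∈ Finset.range n, partialNorm f i x = 0) : partialNorm f n x = 1 := by
  simpa [h] using (mul_map_sum_partialNorm_add_one f n x).symm

theorem mul_partialNorm_map_div_self {G₀ F : Type*} [CommGroupWithZero G₀] [FunLike F G₀ G₀]
    [MonoidHomClass F G₀ G₀] (f : F) (i : ℕ) {y : G₀} (hy : y ≠ 0) :
    y * partialNorm f i (f y / y) = f^[i] y := by
  induction i with
  | zero => simp [partialNorm]
  | succ i ih =>
    rw [← mul_map_partialNorm, ← mul_assoc, mul_div_cancel₀ _ hy, ← map_mul, ih,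
      Function.iterate_succ_apply']

theorem mul_sum_partialNorm_map_div_self {L F : Type*} [Semifield L] [FunLike F L L]
    [MonoidHomClass F L L] (f : F) (n : ℕ) {y : L} (hy : y ≠ 0) :
    y * ∑ i ∈ Finset.range n, partialNorm f i (f y / y) = ∑ i ∈ Finset.range n, f^[i] y := by
  simp only [Finset.mul_sum, mul_partialNorm_map_div_self f _ hy]

theorem bijective_pow_of_forall_mem_zpowers {G : Type*} [Group G] [Finite G] {g : G}
    (hg : ∀ x, x ∈ Subgroup.zpowers g) :
    Function.Bijective fun i : Fin (Nat.card G) ↦ g ^ (i : ℕ) := by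
  rw [Nat.bijective_iff_injective_and_card, Nat.card_fin]
  refine ⟨fun i j hij ↦ Fin.ext (pow_injOn_Iio_orderOf ?_ ?_ hij), rfl⟩ <;>
    simp [orderOf_eq_card_of_forall_mem_zpowers hg]

section CyclicGalois

variable {K L : Type*} [Field K] [Field L] [Algebra K L] [FiniteDimensional K L] [IsGalois K L]
  {σ : Gal(L/K)}

theorem algebraMap_norm_eq_partialNorm (hσ : ∀ τ, τ ∈ Subgroup.zpowers σ) (x : L) :
    algebraMap K L (Algebra.norm K x) = partialNorm σ (Module.finrank K L) x := by
  rw [Algebra.norm_eq_prod_automorphisms, partialNorm, ← IsGalois.card_aut_eq_finrank K L,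
    Finset.prod_range, ← (bijective_pow_of_forall_mem_zpowers hσ).prod_comp]
  simp only [AlgEquiv.coe_pow]

theorem algebraMap_trace_eq_sum_iterate (hσ : ∀ τ, τ ∈ Subgroup.zpowers σ) (x : L) :
    algebraMap K L (Algebra.trace K L x) = ∑ i ∈ Finset.range (Module.finrank K L), σ^[i] x := by
  rw [trace_eq_sum_automorphisms, ← IsGalois.card_aut_eq_finrank K L,
    Finset.sum_range, ← (bijective_pow_of_forall_mem_zpowers hσ).sum_comp]
  simp only [AlgEquiv.coe_pow]

end CyclicGalois

-- `Type` rather than `Type*`: Mathlib's cohomological Hilbert 90 lives in universe `0`.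
theorem exists_eq_map_div_self_of_norm_eq_one {K L : Type} [Field K] [Field L] [Algebra K L]
    [FiniteDimensional K L] [IsGalois K L] {σ : Gal(L/K)} (hσ : ∀ τ, τ ∈ Subgroup.zpowers σ)
    {x : L} (hx : Algebra.norm K x = 1) : ∃ y : L, y ≠ 0 ∧ x = σ y / y := by
  have : IsCyclic Gal(L/K) := ⟨σ, hσ⟩
  obtain ⟨y, rfl⟩ := groupCohomology.exists_div_of_norm_eq_one hσ hx
  exact ⟨y⁻¹, inv_ne_zero y.ne_zero, by rw [map_inv₀, inv_div_inv]⟩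

theorem stmt_14_general {K L : Type} [Field K] [Field L] [Algebra K L]
    [FiniteDimensional K L] [IsGalois K L] {σ : Gal(L/K)} (hσ : ∀ τ, τ ∈ Subgroup.zpowers σ)
    (z : L) :
    ∑ i ∈ Finset.range (Module.finrank K L), partialNorm σ i z = 0 ↔
      ∃ y : L, y ≠ 0 ∧ z = σ y / y ∧ Algebra.trace K L y = 0 := by
  have trace_eq {y : L} (hy : y ≠ 0) : algebraMap K L (Algebra.trace K L y) =
      y * ∑ i ∈ Finset.range (Module.finrank K L), partialNorm σ i (σ y / y) := by
    rw [mul_sum_partialNorm_map_div_self σ _ hy, algebraMap_trace_eq_sum_iterate hσ]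
  constructor
  · intro hsum
    have hnorm : Algebra.norm K z = 1 := (algebraMap K L).injective <| by
      rw [algebraMap_norm_eq_partialNorm hσ, partialNorm_eq_one_of_sum_eq_zero hsum, map_one]
    obtain ⟨y, hy, rfl⟩ := exists_eq_map_div_self_of_norm_eq_one hσ hnorm
    exact ⟨y, hy, rfl, (algebraMap K L).injective <| by rw [trace_eq hy, hsum, mul_zero, map_zero]⟩
  · rintro ⟨y, hy, rfl, htrace⟩
    exact (mul_eq_zero_iff_left hy).1 <| by rw [← trace_eq hy, htrace, map_zero]

section FiniteField

open FiniteField (frobeniusAlgEquivOfAlgebraic)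

theorem mem_zpowers_frobenius_pow {K L : Type*} [Field K] [Fintype K] [Field L] [Finite L]
    [Algebra K L] {s : ℕ} (hs : s.Coprime (Module.finrank K L)) (τ : Gal(L/K)) :
    τ ∈ Subgroup.zpowers (frobeniusAlgEquivOfAlgebraic K L ^ s) := by
  obtain ⟨i, rfl⟩ := (FiniteField.bijective_frobeniusAlgEquivOfAlgebraic_pow K L).surjective τ
  refine pow_mem (mem_zpowers_pow_iff.2 ?_) _
  rwa [FiniteField.orderOf_frobeniusAlgEquivOfAlgebraic]

theorem frobenius_pow_apply {K L : Type*} [Field K] [Fintype K] [Field L] [Algebra K L]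
    [Algebra.IsAlgebraic K L] (s : ℕ) (x : L) :
    (frobeniusAlgEquivOfAlgebraic K L ^ s) x = x ^ Nat.card K ^ s := by
  rw [AlgEquiv.coe_pow, FiniteField.coe_frobeniusAlgEquivOfAlgebraic_iterate,
    Fintype.card_eq_nat_card]

theorem partialNorm_pow {M : Type*} [CommMonoid M] (Q i : ℕ) (x : M) :
    partialNorm (· ^ Q) i x = x ^ ∑ l ∈ Finset.range i, Q ^ l := by
  simp only [partialNorm, pow_iterate, Finset.prod_pow_eq_pow_sum]

theorem sum_pow_geom_sum_eq_zero_iff {K L : Type} [Field K] [Field L] [Finite L] [Algebra K L]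
    {s : ℕ} (hs : s.Coprime (Module.finrank K L)) (z : L) :
    ∑ i ∈ Finset.range (Module.finrank K L), z ^ ∑ l ∈ Finset.range i, Nat.card K ^ (s * l) = 0 ↔
      ∃ y : L, y ≠ 0 ∧ z = y ^ (Nat.card K ^ s - 1) ∧ Algebra.trace K L y = 0 := by
  have : Finite K := Finite.of_injective _ (algebraMap K L).injective
  have := Fintype.ofFinite K
  have frobenius_eq : ⇑(frobeniusAlgEquivOfAlgebraic K L ^ s) = (· ^ Nat.card K ^ s) :=
    funext (frobenius_pow_apply s)
  have div_eq {y : L} (hy : y ≠ 0) : y ^ Nat.card K ^ s / y = y ^ (Nat.card K ^ s - 1) := by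
    rw [div_eq_iff hy, pow_sub_one_mul (pow_ne_zero s Nat.card_pos.ne')]
  have general := stmt_14_general (mem_zpowers_frobenius_pow hs) z
  simp only [frobenius_eq, partialNorm_pow, ← pow_mul] at general
  rw [general]
  exact exists_congr fun y ↦ and_congr_right fun hy ↦ by rw [div_eq hy]

theorem finrank_eq_of_natCard_eq_pow {K V : Type*} [Field K] [Finite K] [AddCommGroup V]
    [Module K V] [Module.Finite K V] {n : ℕ} (hV : Nat.card V = Nat.card K ^ n) :
    Module.finrank K V = n :=
  Nat.pow_right_injective Finite.one_lt_card (Module.natCard_eq_pow_finrank.symm.trans hV)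

theorem exists_subfield_natCard_eq {K : Type*} [Field K] [Finite K] {q n : ℕ} (hn : n ≠ 0)
    (hK : Nat.card K = q ^ n) : ∃ F : Subfield K, Nat.card F = q := by
  have := Fintype.ofFinite K
  have hq : IsPrimePow q := by
    rw [← isPrimePow_pow_iff hn, ← hK, ← Fintype.card_eq_nat_card]
    exact FiniteField.isPrimePow_card K
  obtain ⟨p, k, hp, hk, rfl⟩ := hq
  have : Fact p.Prime := ⟨hp.nat_prime⟩
  rw [← pow_mul] at hK
  have : CharP K p := charP_of_card_eq_prime_pow (Fintype.card_eq_nat_card.trans hK)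
  let := ZMod.algebra K p
  have finrank_eq : Module.finrank (ZMod p) K = k * n :=
    finrank_eq_of_natCard_eq_pow (by rw [hK, Nat.card_zmod])
  obtain ⟨φ⟩ : Nonempty (GaloisField p k →ₐ[ZMod p] K) :=
    FiniteField.nonempty_algHom_of_finrank_dvd <| by
      rw [GaloisField.finrank p hk.ne', finrank_eq]
      exact dvd_mul_right k n
  refine ⟨(φ : GaloisField p k →+* K).fieldRange, ?_⟩
  rw [← GaloisField.card p k hk.ne']
  exact (Nat.card_congr (Equiv.ofInjective φ φ.injective)).symm

end FiniteField

/-- from the proof of Proposition `th:correspondence`: for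
`gcd(s,n) = 1` and `z ∈ F_{q^n}`, one has `Σ_{i=0}^{n-1} z^{(q^{si}-1)/(q^s-1)} = 0`
iff `z = y^{q^s-1}` for some `y ∈ F_{q^n}^*` with `Tr_{q^n/q}(y) = 0`.  The exponent
`(q^{si}-1)/(q^s-1)` is written as the geometric sum `Σ_{l<i} q^{sl}` (so the `i = 0`
term is `z^0 = 1`), and `Tr_{q^n/q}(y) = Σ_{i<n} y^{q^i}`. -/
theorem stmt_14 (p e q n s : ℕ) (hp : p.Prime) (he : 1 ≤ e) (hq : q = p ^ e)
    (hn : 1 ≤ n) (hs : 1 ≤ s) (hgcd : Nat.gcd s n = 1)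
    (K : Type) [Field K] [Fintype K] (hK : Fintype.card K = q ^ n)
    (z : K) :
    (∑ i ∈ Finset.range n, z ^ (∑ l ∈ Finset.range i, q ^ (s * l))) = 0 ↔
      ∃ y : K, y ≠ 0 ∧ z = y ^ (q ^ s - 1) ∧ (∑ i ∈ Finset.range n, y ^ q ^ i) = 0 := by
  rw [Fintype.card_eq_nat_card] at hK
  obtain ⟨F, rfl⟩ := exists_subfield_natCard_eq (Nat.one_le_iff_ne_zero.1 hn) hK
  obtain rfl := finrank_eq_of_natCard_eq_pow hK
  simpa only [← FiniteField.algebraMap_trace_eq_sum_pow, map_eq_zero] using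
    sum_pow_geom_sum_eq_zero_iff hgcd z
end
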